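/- arXiv:2202.12101 — 2 statements merged into one kernel-verified Lean document; each statement's English description precedes it below -/
import Mathlib

section
/- Let d₁, d₂ ≥ 1 be integers and s > 0. For bounded nonempty open connected sets Ω₁ ⊆ ℝ^{d₁} and Ω₂ ⊆ ℝ^{d₂}, the first Grushin eigenvalue of the product satisfies λ₁(Ω₁ × Ω₂) = E₁(μ₁(Ω₂), Ω₁); that is, the infimum over nonzero u ∈ C_c^∞(Ω₁ × Ω₂) of (∫_{Ω₁×Ω₂} |∇_{x₁}u|² + |x₁|^{2s}|∇_{x₂}u|² dx)/(∫_{Ω₁×Ω₂} u² dx) equals the infimum over nonzero f ∈ C_c^∞(Ω₁) of (∫_{Ω₁} |∇f|² + μ₁(Ω₂)|x₁|^{2s} f² dx₁)/(∫_{Ω₁} f² dx₁). -/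
open MeasureTheory Set Filter

/-- First Dirichlet eigenvalue (Rayleigh quotient infimum) of the Laplacian on `Ω ⊆ ℝ^d`. -/
noncomputable def dirichletMu1 (d : ℕ) (Ω : Set (EuclideanSpace ℝ (Fin d))) : ℝ :=
  sInf { q : ℝ | ∃ g : EuclideanSpace ℝ (Fin d) → ℝ,
    ContDiff ℝ (⊤ : ℕ∞) g ∧ HasCompactSupport g ∧ tsupport g ⊆ Ω ∧ g ≠ 0 ∧
    q = (∫ x in Ω, ‖gradient g x‖ ^ 2) / (∫ x in Ω, (g x) ^ 2) }

/-- First eigenvalue (Rayleigh quotient infimum) of the Schrödinger operator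
`-Δ + σ |x|^{2s}` on `Ω ⊆ ℝ^d`. -/
noncomputable def schrodingerE1 (d : ℕ) (s σ : ℝ) (Ω : Set (EuclideanSpace ℝ (Fin d))) : ℝ :=
  sInf { q : ℝ | ∃ f : EuclideanSpace ℝ (Fin d) → ℝ,
    ContDiff ℝ (⊤ : ℕ∞) f ∧ HasCompactSupport f ∧ tsupport f ⊆ Ω ∧ f ≠ 0 ∧
    q = (∫ x in Ω, (‖gradient f x‖ ^ 2 + σ * ‖x‖ ^ (2 * s) * (f x) ^ 2)) /
        (∫ x in Ω, (f x) ^ 2) }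

/-- First eigenvalue (Rayleigh quotient infimum) of the Grushin operator
`Δ_{x₁} + |x₁|^{2s} Δ_{x₂}` with Dirichlet conditions on
`Ω ⊆ ℝ^{d₁} × ℝ^{d₂}`. -/
noncomputable def grushinLambda1 (d₁ d₂ : ℕ) (s : ℝ)
    (Ω : Set (EuclideanSpace ℝ (Fin d₁) × EuclideanSpace ℝ (Fin d₂))) : ℝ :=
  sInf { q : ℝ | ∃ u : EuclideanSpace ℝ (Fin d₁) × EuclideanSpace ℝ (Fin d₂) → ℝ,
    ContDiff ℝ (⊤ : ℕ∞) u ∧ HasCompactSupport u ∧ tsupport u ⊆ Ω ∧ u ≠ 0 ∧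
    q = (∫ x in Ω, (‖gradient (fun y => u (y, x.2)) x.1‖ ^ 2
          + ‖x.1‖ ^ (2 * s) * ‖gradient (fun y => u (x.1, y)) x.2‖ ^ 2)) /
        (∫ x in Ω, (u x) ^ 2) }

section helpers

variable {d d₁ d₂ : ℕ}

lemma norm_gradient_eq (f : EuclideanSpace ℝ (Fin d) → ℝ) (x : EuclideanSpace ℝ (Fin d)) :
    ‖gradient f x‖ = ‖fderiv ℝ f x‖ := by
  simp [gradient]

lemma test_sq_pos {f : EuclideanSpace ℝ (Fin d) → ℝ} {Ω : Set (EuclideanSpace ℝ (Fin d))}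
    (hf : ContDiff ℝ (⊤ : ℕ∞) f) (hc : HasCompactSupport f) (ht : tsupport f ⊆ Ω) (h0 : f ≠ 0) :
    0 < ∫ x in Ω, (f x) ^ 2 := by
  rw [setIntegral_eq_integral_of_forall_compl_eq_zero]
  · obtain ⟨x, hx⟩ := Function.ne_iff.1 h0
    refine Continuous.integral_pos_of_hasCompactSupport_nonneg_nonzero (x := x)
      (hf.continuous.pow 2) ?_ (fun y => by positivity) (by simpa using hx)
    exact hc.comp_left (g := fun t : ℝ => t ^ 2) (by simp)
  · intro x hx
    have : f x = 0 := image_eq_zero_of_notMem_tsupport (fun h => hx (ht h))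
    simp [this]

lemma test_sq_pos_prod {f : EuclideanSpace ℝ (Fin d₁) × EuclideanSpace ℝ (Fin d₂) → ℝ}
    {Ω : Set (EuclideanSpace ℝ (Fin d₁) × EuclideanSpace ℝ (Fin d₂))}
    (hf : ContDiff ℝ (⊤ : ℕ∞) f) (hc : HasCompactSupport f) (ht : tsupport f ⊆ Ω) (h0 : f ≠ 0) :
    0 < ∫ x in Ω, (f x) ^ 2 := by
  rw [setIntegral_eq_integral_of_forall_compl_eq_zero]
  · obtain ⟨x, hx⟩ := Function.ne_iff.1 h0
    refine Continuous.integral_pos_of_hasCompactSupport_nonneg_nonzero (x := x)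
      (hf.continuous.pow 2) ?_ (fun y => by positivity) (by simpa using hx)
    exact hc.comp_left (g := fun t : ℝ => t ^ 2) (by simp)
  · intro x hx
    have : f x = 0 := image_eq_zero_of_notMem_tsupport (fun h => hx (ht h))
    simp [this]

lemma exists_test {Ω : Set (EuclideanSpace ℝ (Fin d))} (ho : IsOpen Ω) (hn : Ω.Nonempty) :
    ∃ f : EuclideanSpace ℝ (Fin d) → ℝ,
      ContDiff ℝ (⊤ : ℕ∞) f ∧ HasCompactSupport f ∧ tsupport f ⊆ Ω ∧ f ≠ 0 := by
  obtain ⟨x, hx⟩ := hn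
  obtain ⟨f, h1, h2, h3, -, h5⟩ := exists_contDiff_tsupport_subset (n := (⊤ : ℕ∞)) (ho.mem_nhds hx)
  refine ⟨f, h3, h2, h1, fun h => ?_⟩
  simp [h] at h5

lemma dirichletMu1_nonneg (Ω : Set (EuclideanSpace ℝ (Fin d))) : 0 ≤ dirichletMu1 d Ω := by
  apply Real.sInf_nonneg
  rintro q ⟨g, -, -, -, -, rfl⟩
  exact div_nonneg (integral_nonneg fun x => by positivity) (integral_nonneg fun x => by positivity)

lemma dirichlet_ineq {f : EuclideanSpace ℝ (Fin d) → ℝ} {Ω : Set (EuclideanSpace ℝ (Fin d))}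
    (hf : ContDiff ℝ (⊤ : ℕ∞) f) (hc : HasCompactSupport f) (ht : tsupport f ⊆ Ω) :
    dirichletMu1 d Ω * ∫ x in Ω, (f x) ^ 2 ≤ ∫ x in Ω, ‖gradient f x‖ ^ 2 := by
  by_cases h0 : f = 0
  · subst h0
    simpa using integral_nonneg (fun x => by positivity)
  rw [← le_div_iff₀ (test_sq_pos hf hc ht h0)]
  refine csInf_le ⟨0, ?_⟩ ⟨f, hf, hc, ht, h0, rfl⟩
  rintro q ⟨g, -, -, -, -, rfl⟩
  exact div_nonneg (integral_nonneg fun x => by positivity) (integral_nonneg fun x => by positivity)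

lemma schrodinger_ineq {s σ : ℝ} (hσ : 0 ≤ σ) {f : EuclideanSpace ℝ (Fin d) → ℝ}
    {Ω : Set (EuclideanSpace ℝ (Fin d))}
    (hf : ContDiff ℝ (⊤ : ℕ∞) f) (hc : HasCompactSupport f) (ht : tsupport f ⊆ Ω) :
    schrodingerE1 d s σ Ω * ∫ x in Ω, (f x) ^ 2 ≤
      ∫ x in Ω, (‖gradient f x‖ ^ 2 + σ * ‖x‖ ^ (2 * s) * (f x) ^ 2) := by
  by_cases h0 : f = 0
  · subst h0
    have : 0 ≤ ∫ x in Ω, (‖gradient (0 : EuclideanSpace ℝ (Fin d) → ℝ) x‖ ^ 2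
      + σ * ‖x‖ ^ (2 * s) * ((0 : EuclideanSpace ℝ (Fin d) → ℝ) x) ^ 2) :=
      integral_nonneg (fun x => by positivity)
    simpa using this
  rw [← le_div_iff₀ (test_sq_pos hf hc ht h0)]
  refine csInf_le ⟨0, ?_⟩ ⟨f, hf, hc, ht, h0, rfl⟩
  rintro q ⟨g, -, -, -, -, rfl⟩
  exact div_nonneg (integral_nonneg fun x => by positivity) (integral_nonneg fun x => by positivity)

lemma slice_left {u : EuclideanSpace ℝ (Fin d₁) × EuclideanSpace ℝ (Fin d₂) → ℝ}
    {Ω₁ : Set (EuclideanSpace ℝ (Fin d₁))} {Ω₂ : Set (EuclideanSpace ℝ (Fin d₂))}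
    (hf : ContDiff ℝ (⊤ : ℕ∞) u) (hc : HasCompactSupport u) (ht : tsupport u ⊆ Ω₁ ×ˢ Ω₂)
    (b : EuclideanSpace ℝ (Fin d₂)) :
    ContDiff ℝ (⊤ : ℕ∞) (fun y => u (y, b)) ∧ HasCompactSupport (fun y => u (y, b)) ∧
      tsupport (fun y => u (y, b)) ⊆ Ω₁ := by
  have hcont : Continuous (fun y : EuclideanSpace ℝ (Fin d₁) => (y, b)) := by fun_prop
  refine ⟨hf.comp (contDiff_id.prodMk contDiff_const), ?_, ?_⟩
  · refine HasCompactSupport.intro (hc.isCompact.image continuous_fst) (fun y hy => ?_)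
    exact image_eq_zero_of_notMem_tsupport (fun h => hy ⟨_, h, rfl⟩)
  · intro y hy
    exact (ht (tsupport_comp_subset_preimage u hcont hy)).1

lemma slice_right {u : EuclideanSpace ℝ (Fin d₁) × EuclideanSpace ℝ (Fin d₂) → ℝ}
    {Ω₁ : Set (EuclideanSpace ℝ (Fin d₁))} {Ω₂ : Set (EuclideanSpace ℝ (Fin d₂))}
    (hf : ContDiff ℝ (⊤ : ℕ∞) u) (hc : HasCompactSupport u) (ht : tsupport u ⊆ Ω₁ ×ˢ Ω₂)
    (a : EuclideanSpace ℝ (Fin d₁)) :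
    ContDiff ℝ (⊤ : ℕ∞) (fun y => u (a, y)) ∧ HasCompactSupport (fun y => u (a, y)) ∧
      tsupport (fun y => u (a, y)) ⊆ Ω₂ := by
  have hcont : Continuous (fun y : EuclideanSpace ℝ (Fin d₂) => (a, y)) := by fun_prop
  refine ⟨hf.comp (contDiff_const.prodMk contDiff_id), ?_, ?_⟩
  · refine HasCompactSupport.intro (hc.isCompact.image continuous_snd) (fun y hy => ?_)
    exact image_eq_zero_of_notMem_tsupport (fun h => hy ⟨_, h, rfl⟩)
  · intro y hy
    exact (ht (tsupport_comp_subset_preimage u hcont hy)).2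

lemma grad_left {u : EuclideanSpace ℝ (Fin d₁) × EuclideanSpace ℝ (Fin d₂) → ℝ}
    (hf : ContDiff ℝ (⊤ : ℕ∞) u) (x : EuclideanSpace ℝ (Fin d₁) × EuclideanSpace ℝ (Fin d₂)) :
    ‖gradient (fun y => u (y, x.2)) x.1‖ =
      ‖(fderiv ℝ u x).comp (ContinuousLinearMap.inl ℝ _ _)‖ := by
  rw [norm_gradient_eq]
  congr 1
  have h := (hf.differentiable (by simp) x).hasFDerivAt
  exact (HasFDerivAt.comp x.1 (g := u) (f := fun y => (y, x.2)) h
    (hasFDerivAt_prodMk_left x.1 x.2)).fderiv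

lemma grad_right {u : EuclideanSpace ℝ (Fin d₁) × EuclideanSpace ℝ (Fin d₂) → ℝ}
    (hf : ContDiff ℝ (⊤ : ℕ∞) u) (x : EuclideanSpace ℝ (Fin d₁) × EuclideanSpace ℝ (Fin d₂)) :
    ‖gradient (fun y => u (x.1, y)) x.2‖ =
      ‖(fderiv ℝ u x).comp (ContinuousLinearMap.inr ℝ _ _)‖ := by
  rw [norm_gradient_eq]
  congr 1
  have h := (hf.differentiable (by simp) x).hasFDerivAt
  exact (HasFDerivAt.comp x.2 (g := u) (f := fun y => (x.1, y)) h
    (hasFDerivAt_prodMk_right x.1 x.2)).fderiv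

lemma continuous_weight {s : ℝ} (hs : 0 < s) :
    Continuous (fun x : EuclideanSpace ℝ (Fin d) => ‖x‖ ^ (2 * s)) :=
  continuous_norm.rpow_const (fun _ => Or.inr (by positivity))

end helpers

set_option maxHeartbeats 1000000 in
lemma lower_ineq {d₁ d₂ : ℕ} {s : ℝ} (hs : 0 < s)
    {Ω₁ : Set (EuclideanSpace ℝ (Fin d₁))} {Ω₂ : Set (EuclideanSpace ℝ (Fin d₂))}
    {u : EuclideanSpace ℝ (Fin d₁) × EuclideanSpace ℝ (Fin d₂) → ℝ}
    (hf : ContDiff ℝ (⊤ : ℕ∞) u) (hc : HasCompactSupport u) (ht : tsupport u ⊆ Ω₁ ×ˢ Ω₂) :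
    schrodingerE1 d₁ s (dirichletMu1 d₂ Ω₂) Ω₁ * ∫ x in Ω₁ ×ˢ Ω₂, (u x) ^ 2 ≤
      ∫ x in Ω₁ ×ˢ Ω₂, (‖gradient (fun y => u (y, x.2)) x.1‖ ^ 2
          + ‖x.1‖ ^ (2 * s) * ‖gradient (fun y => u (x.1, y)) x.2‖ ^ 2) := by
  set μ := dirichletMu1 d₂ Ω₂ with hμ
  have hμ0 : 0 ≤ μ := dirichletMu1_nonneg _
  set E := schrodingerE1 d₁ s μ Ω₁
  have hw : Continuous (fun x : EuclideanSpace ℝ (Fin d₁) × EuclideanSpace ℝ (Fin d₂) =>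
      ‖x.1‖ ^ (2 * s)) := (continuous_weight hs).comp continuous_fst
  have hcd := hf.continuous_fderiv (by simp)
  have hsd : HasCompactSupport (fderiv ℝ u) := hc.fderiv ℝ
  have hvol : (volume : Measure (EuclideanSpace ℝ (Fin d₁) × EuclideanSpace ℝ (Fin d₂))).restrict
      (Ω₁ ×ˢ Ω₂) = (volume.restrict Ω₁).prod (volume.restrict Ω₂) := by
    rw [Measure.volume_eq_prod, Measure.prod_restrict]
  have i1 : IntegrableOn (fun x => ‖gradient (fun y => u (y, x.2)) x.1‖ ^ 2) (Ω₁ ×ˢ Ω₂) := by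
    apply Integrable.integrableOn
    simp_rw [grad_left hf]
    refine Continuous.integrable_of_hasCompactSupport (by fun_prop) ?_
    exact hsd.comp_left (g := fun L : EuclideanSpace ℝ (Fin d₁) × EuclideanSpace ℝ (Fin d₂) →L[ℝ] ℝ =>
        ‖L.comp (ContinuousLinearMap.inl ℝ (EuclideanSpace ℝ (Fin d₁)) (EuclideanSpace ℝ (Fin d₂)))‖ ^ 2)
        (by simp)
  have i2 : IntegrableOn (fun x => ‖x.1‖ ^ (2 * s) * ‖gradient (fun y => u (x.1, y)) x.2‖ ^ 2)
      (Ω₁ ×ˢ Ω₂) := by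
    apply Integrable.integrableOn
    simp_rw [grad_right hf]
    refine Continuous.integrable_of_hasCompactSupport (by fun_prop) ?_
    exact HasCompactSupport.mul_left
      (hsd.comp_left (g := fun L : EuclideanSpace ℝ (Fin d₁) × EuclideanSpace ℝ (Fin d₂) →L[ℝ] ℝ =>
        ‖L.comp (ContinuousLinearMap.inr ℝ (EuclideanSpace ℝ (Fin d₁)) (EuclideanSpace ℝ (Fin d₂)))‖ ^ 2)
        (by simp))
  have hc2 : HasCompactSupport (fun x => u x ^ 2) :=
    hc.comp_left (g := fun t : ℝ => t ^ 2) (by simp)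
  have hcu : Continuous u := hf.continuous
  have i3 : IntegrableOn (fun x => μ * ‖x.1‖ ^ (2 * s) * u x ^ 2) (Ω₁ ×ˢ Ω₂) := by
    apply Integrable.integrableOn
    exact Continuous.integrable_of_hasCompactSupport (by fun_prop) hc2.mul_left
  have i4 : IntegrableOn (fun x => u x ^ 2) (Ω₁ ×ˢ Ω₂) := by
    apply Integrable.integrableOn
    exact Continuous.integrable_of_hasCompactSupport (by fun_prop) hc2
  have i5 := i1.add i3
  have i6 := i4.const_mul E
  unfold IntegrableOn at *
  rw [hvol] at *
  calc E * ∫ x, u x ^ 2 ∂((volume.restrict Ω₁).prod (volume.restrict Ω₂))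
      = ∫ x, E * u x ^ 2 ∂((volume.restrict Ω₁).prod (volume.restrict Ω₂)) := by
        rw [integral_const_mul]
    _ = ∫ b in Ω₂, ∫ a in Ω₁, E * u (a, b) ^ 2 := integral_prod_symm _ i6
    _ ≤ ∫ b in Ω₂, ∫ a in Ω₁, (‖gradient (fun y => u (y, b)) a‖ ^ 2
          + μ * ‖a‖ ^ (2 * s) * u (a, b) ^ 2) := by
        refine integral_mono i6.integral_prod_right i5.integral_prod_right (fun b => ?_)
        obtain ⟨h1, h2, h3⟩ := slice_left hf hc ht b
        simpa only [integral_const_mul] using schrodinger_ineq (s := s) hμ0 h1 h2 h3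
    _ = ∫ x, (‖gradient (fun y => u (y, x.2)) x.1‖ ^ 2
          + μ * ‖x.1‖ ^ (2 * s) * u x ^ 2) ∂((volume.restrict Ω₁).prod (volume.restrict Ω₂)) :=
        (integral_prod_symm _ i5).symm
    _ = (∫ x, ‖gradient (fun y => u (y, x.2)) x.1‖ ^ 2
            ∂((volume.restrict Ω₁).prod (volume.restrict Ω₂)))
          + ∫ x, μ * ‖x.1‖ ^ (2 * s) * u x ^ 2
            ∂((volume.restrict Ω₁).prod (volume.restrict Ω₂)) := integral_add i1 i3
    _ ≤ (∫ x, ‖gradient (fun y => u (y, x.2)) x.1‖ ^ 2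
            ∂((volume.restrict Ω₁).prod (volume.restrict Ω₂)))
          + ∫ x, ‖x.1‖ ^ (2 * s) * ‖gradient (fun y => u (x.1, y)) x.2‖ ^ 2
            ∂((volume.restrict Ω₁).prod (volume.restrict Ω₂)) := by
        gcongr 1
        rw [integral_prod _ i3, integral_prod _ i2]
        refine integral_mono i3.integral_prod_left i2.integral_prod_left (fun a => ?_)
        obtain ⟨h1, h2, h3⟩ := slice_right hf hc ht a
        have h := mul_le_mul_of_nonneg_left (dirichlet_ineq h1 h2 h3)
          (by positivity : 0 ≤ ‖a‖ ^ (2 * s))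
        simp only [integral_const_mul]
        rw [← hμ] at h
        linarith
    _ = _ := (integral_add i1 i2).symm

lemma upper_eq {d₁ d₂ : ℕ} {s : ℝ} (hs : 0 < s)
    {Ω₁ : Set (EuclideanSpace ℝ (Fin d₁))} {Ω₂ : Set (EuclideanSpace ℝ (Fin d₂))}
    {f : EuclideanSpace ℝ (Fin d₁) → ℝ} {g : EuclideanSpace ℝ (Fin d₂) → ℝ}
    (hf : ContDiff ℝ (⊤ : ℕ∞) f) (hfc : HasCompactSupport f)
    (hg : ContDiff ℝ (⊤ : ℕ∞) g) (hgc : HasCompactSupport g) :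
      ∫ x in Ω₁ ×ˢ Ω₂, (‖gradient (fun y => f y * g x.2) x.1‖ ^ 2
          + ‖x.1‖ ^ (2 * s) * ‖gradient (fun y => f x.1 * g y) x.2‖ ^ 2) =
      (∫ x in Ω₁, ‖gradient f x‖ ^ 2) * (∫ x in Ω₂, g x ^ 2) +
      (∫ x in Ω₁, ‖x‖ ^ (2 * s) * f x ^ 2) * (∫ x in Ω₂, ‖gradient g x‖ ^ 2) := by
  have e1 : ∀ x : EuclideanSpace ℝ (Fin d₁) × EuclideanSpace ℝ (Fin d₂),
      ‖gradient (fun y => f y * g x.2) x.1‖ ^ 2 = ‖gradient f x.1‖ ^ 2 * g x.2 ^ 2 := by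
    intro x
    rw [norm_gradient_eq, norm_gradient_eq,
      fderiv_mul_const (hf.differentiable (by simp) x.1), norm_smul, mul_pow]
    simp [mul_comm]
  have e2 : ∀ x : EuclideanSpace ℝ (Fin d₁) × EuclideanSpace ℝ (Fin d₂),
      ‖x.1‖ ^ (2 * s) * ‖gradient (fun y => f x.1 * g y) x.2‖ ^ 2
        = (‖x.1‖ ^ (2 * s) * f x.1 ^ 2) * ‖gradient g x.2‖ ^ 2 := by
    intro x
    rw [norm_gradient_eq, norm_gradient_eq,
      fderiv_const_mul (hg.differentiable (by simp) x.2), norm_smul, mul_pow]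
    simp [mul_assoc]
  simp_rw [e1, e2]
  have hvol : (volume : Measure (EuclideanSpace ℝ (Fin d₁) × EuclideanSpace ℝ (Fin d₂))).restrict
      (Ω₁ ×ˢ Ω₂) = (volume.restrict Ω₁).prod (volume.restrict Ω₂) := by
    rw [Measure.volume_eq_prod, Measure.prod_restrict]
  have hcf : Continuous f := hf.continuous
  have hcg : Continuous g := hg.continuous
  have hdf := hf.continuous_fderiv (by simp)
  have hdg := hg.continuous_fderiv (by simp)
  have hw := continuous_weight (d := d₁) hs
  have i1 : Integrable (fun x => ‖gradient f x‖ ^ 2) (volume.restrict Ω₁) := by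
    apply Integrable.restrict
    simp_rw [norm_gradient_eq]
    exact Continuous.integrable_of_hasCompactSupport (by fun_prop)
      ((hfc.fderiv ℝ).comp_left (g := fun L => ‖L‖ ^ 2) (by simp))
  have i2 : Integrable (fun x => ‖gradient g x‖ ^ 2) (volume.restrict Ω₂) := by
    apply Integrable.restrict
    simp_rw [norm_gradient_eq]
    exact Continuous.integrable_of_hasCompactSupport (by fun_prop)
      ((hgc.fderiv ℝ).comp_left (g := fun L => ‖L‖ ^ 2) (by simp))
  have i3 : Integrable (fun x => ‖x‖ ^ (2 * s) * f x ^ 2) (volume.restrict Ω₁) := by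
    apply Integrable.restrict
    exact Continuous.integrable_of_hasCompactSupport (by fun_prop)
      (HasCompactSupport.mul_left (hfc.comp_left (g := fun t : ℝ => t ^ 2) (by simp)))
  have i4 : Integrable (fun x => g x ^ 2) (volume.restrict Ω₂) := by
    apply Integrable.restrict
    exact Continuous.integrable_of_hasCompactSupport (by fun_prop)
      (hgc.comp_left (g := fun t : ℝ => t ^ 2) (by simp))
  rw [hvol, integral_add (i1.mul_prod i4) (i3.mul_prod i2), integral_prod_mul
    (fun x => ‖gradient f x‖ ^ 2) (fun x => g x ^ 2), integral_prod_mul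
    (fun x => ‖x‖ ^ (2 * s) * f x ^ 2) (fun x => ‖gradient g x‖ ^ 2)]

lemma schr_split {d : ℕ} {s σ : ℝ} (hs : 0 < s) {Ω : Set (EuclideanSpace ℝ (Fin d))}
    {f : EuclideanSpace ℝ (Fin d) → ℝ}
    (hf : ContDiff ℝ (⊤ : ℕ∞) f) (hfc : HasCompactSupport f) :
    ∫ x in Ω, (‖gradient f x‖ ^ 2 + σ * ‖x‖ ^ (2 * s) * (f x) ^ 2) =
      (∫ x in Ω, ‖gradient f x‖ ^ 2) + σ * ∫ x in Ω, ‖x‖ ^ (2 * s) * f x ^ 2 := by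
  have hcf : Continuous f := hf.continuous
  have hdf := hf.continuous_fderiv (by simp)
  have hw := continuous_weight (d := d) hs
  have i1 : Integrable (fun x => ‖gradient f x‖ ^ 2) (volume.restrict Ω) := by
    apply Integrable.restrict
    simp_rw [norm_gradient_eq]
    exact Continuous.integrable_of_hasCompactSupport (by fun_prop)
      ((hfc.fderiv ℝ).comp_left (g := fun L => ‖L‖ ^ 2) (by simp))
  have i3 : Integrable (fun x => ‖x‖ ^ (2 * s) * f x ^ 2) (volume.restrict Ω) := by
    apply Integrable.restrict
    exact Continuous.integrable_of_hasCompactSupport (by fun_prop)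
      (HasCompactSupport.mul_left (hfc.comp_left (g := fun t : ℝ => t ^ 2) (by simp)))
  simp_rw [mul_assoc]
  rw [integral_add i1 (i3.const_mul σ), integral_const_mul]

lemma tensor_test {d₁ d₂ : ℕ}
    {Ω₁ : Set (EuclideanSpace ℝ (Fin d₁))} {Ω₂ : Set (EuclideanSpace ℝ (Fin d₂))}
    {f : EuclideanSpace ℝ (Fin d₁) → ℝ} {g : EuclideanSpace ℝ (Fin d₂) → ℝ}
    (hf : ContDiff ℝ (⊤ : ℕ∞) f) (hfc : HasCompactSupport f) (hft : tsupport f ⊆ Ω₁) (hf0 : f ≠ 0)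
    (hg : ContDiff ℝ (⊤ : ℕ∞) g) (hgc : HasCompactSupport g) (hgt : tsupport g ⊆ Ω₂)
    (hg0 : g ≠ 0) :
    ContDiff ℝ (⊤ : ℕ∞) (fun x : EuclideanSpace ℝ (Fin d₁) × EuclideanSpace ℝ (Fin d₂) =>
        f x.1 * g x.2) ∧
      HasCompactSupport (fun x : EuclideanSpace ℝ (Fin d₁) × EuclideanSpace ℝ (Fin d₂) =>
        f x.1 * g x.2) ∧
      tsupport (fun x : EuclideanSpace ℝ (Fin d₁) × EuclideanSpace ℝ (Fin d₂) =>
        f x.1 * g x.2) ⊆ Ω₁ ×ˢ Ω₂ ∧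
      (fun x : EuclideanSpace ℝ (Fin d₁) × EuclideanSpace ℝ (Fin d₂) => f x.1 * g x.2) ≠ 0 := by
  have hz : ∀ x ∉ tsupport f ×ˢ tsupport g, f x.1 * g x.2 = 0 := by
    intro x hx
    by_contra h
    obtain ⟨h1, h2⟩ := mul_ne_zero_iff.1 h
    exact hx ⟨subset_tsupport _ h1, subset_tsupport _ h2⟩
  have hk : IsCompact (tsupport f ×ˢ tsupport g) := hfc.isCompact.prod hgc.isCompact
  refine ⟨(hf.comp contDiff_fst).mul (hg.comp contDiff_snd), HasCompactSupport.intro hk hz, ?_, ?_⟩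
  · refine (closure_minimal ?_ hk.isClosed).trans (Set.prod_mono hft hgt)
    intro x hx
    by_contra h
    exact hx (hz x h)
  · obtain ⟨a, ha⟩ := Function.ne_iff.1 hf0
    obtain ⟨b, hb⟩ := Function.ne_iff.1 hg0
    intro h
    exact mul_ne_zero ha hb (congrFun h (a, b))

/-- for bounded nonempty open connected `Ω₁ ⊆ ℝ^{d₁}`, `Ω₂ ⊆ ℝ^{d₂}`,
`λ₁(Ω₁ × Ω₂) = E₁(μ₁(Ω₂), Ω₁)`. -/
theorem grushin_lambda1_product_eq (d₁ d₂ : ℕ) (hd₁ : 1 ≤ d₁) (hd₂ : 1 ≤ d₂)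
    (s : ℝ) (hs : 0 < s)
    (Ω₁ : Set (EuclideanSpace ℝ (Fin d₁))) (Ω₂ : Set (EuclideanSpace ℝ (Fin d₂)))
    (hΩ₁open : IsOpen Ω₁) (hΩ₁conn : IsConnected Ω₁) (hΩ₁bd : Bornology.IsBounded Ω₁)
    (hΩ₂open : IsOpen Ω₂) (hΩ₂conn : IsConnected Ω₂) (hΩ₂bd : Bornology.IsBounded Ω₂) :
    grushinLambda1 d₁ d₂ s (Ω₁ ×ˢ Ω₂) = schrodingerE1 d₁ s (dirichletMu1 d₂ Ω₂) Ω₁ := by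
  apply le_antisymm
  · have hne : ∃ f, _ := exists_test hΩ₁open hΩ₁conn.nonempty
    have hne2 : ∃ f, _ := exists_test hΩ₂open hΩ₂conn.nonempty
    obtain ⟨f₀, k1, k2, k3, k4⟩ := hne
    obtain ⟨g₀, l1, l2, l3, l4⟩ := hne2
    refine le_csInf ⟨_, f₀, k1, k2, k3, k4, rfl⟩ ?_
    rintro q ⟨f, hf, hfc, hft, hf0, rfl⟩
    have hF := test_sq_pos hf hfc hft hf0
    rw [schr_split hs hf hfc, le_div_iff₀ hF]
    -- the key inequality for every `g`
    have key : ∀ g : EuclideanSpace ℝ (Fin d₂) → ℝ, ContDiff ℝ (⊤ : ℕ∞) g → HasCompactSupport g →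
        tsupport g ⊆ Ω₂ → g ≠ 0 →
        grushinLambda1 d₁ d₂ s (Ω₁ ×ˢ Ω₂) * (∫ x in Ω₁, f x ^ 2) ≤
          (∫ x in Ω₁, ‖gradient f x‖ ^ 2) +
          ((∫ x in Ω₂, ‖gradient g x‖ ^ 2) / (∫ x in Ω₂, g x ^ 2)) *
            ∫ x in Ω₁, ‖x‖ ^ (2 * s) * f x ^ 2 := by
      intro g hg hgc hgt hg0
      have hG := test_sq_pos hg hgc hgt hg0
      obtain ⟨t1, t2, t3, t4⟩ := tensor_test hf hfc hft hf0 hg hgc hgt hg0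
      have hle : grushinLambda1 d₁ d₂ s (Ω₁ ×ˢ Ω₂) ≤ _ :=
        csInf_le ⟨0, by
          rintro q ⟨g, -, -, -, -, rfl⟩
          exact div_nonneg (integral_nonneg fun x => by positivity)
            (integral_nonneg fun x => by positivity)⟩ ⟨_, t1, t2, t3, t4, rfl⟩
      have hprod : ∫ x in Ω₁ ×ˢ Ω₂, (f x.1 * g x.2) ^ 2 =
          (∫ x in Ω₁, f x ^ 2) * ∫ x in Ω₂, g x ^ 2 := by
        simp_rw [mul_pow]
        rw [Measure.volume_eq_prod]
        exact setIntegral_prod_mul (fun x => f x ^ 2) (fun x => g x ^ 2) Ω₁ Ω₂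
      simp only at hle
      rw [upper_eq hs hf hfc hg hgc, hprod, le_div_iff₀ (mul_pos hF hG)] at hle
      rw [← mul_le_mul_iff_left₀ hG]
      refine (le_of_eq (by ring)).trans (hle.trans (le_of_eq ?_))
      field_simp
    have hW : 0 ≤ ∫ x in Ω₁, ‖x‖ ^ (2 * s) * f x ^ 2 := integral_nonneg fun x => by positivity
    rcases hW.eq_or_lt with h | h
    · have := key g₀ l1 l2 l3 l4
      rw [← h] at this ⊢
      simpa using this
    · rw [← sub_le_iff_le_add', ← div_le_iff₀ h]
      refine le_csInf ⟨_, g₀, l1, l2, l3, l4, rfl⟩ ?_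
      rintro q ⟨g, hg, hgc, hgt, hg0, rfl⟩
      rw [div_le_iff₀ h, sub_le_iff_le_add']
      exact key g hg hgc hgt hg0
  · obtain ⟨f, k1, k2, k3, k4⟩ := exists_test hΩ₁open hΩ₁conn.nonempty
    obtain ⟨g, l1, l2, l3, l4⟩ := exists_test hΩ₂open hΩ₂conn.nonempty
    obtain ⟨t1, t2, t3, t4⟩ := tensor_test k1 k2 k3 k4 l1 l2 l3 l4
    refine le_csInf ⟨_, _, t1, t2, t3, t4, rfl⟩ ?_
    rintro q ⟨u, hu, huc, hut, hu0, rfl⟩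
    rw [le_div_iff₀ (test_sq_pos_prod hu huc hut hu0)]
    exact lower_ineq hs hu huc hut
end

section
/- Let d₁, d₂ ≥ 1 be integers, s > 0 and V > 0. There exist radii r₁, r₂ > 0 with τ_{d₁} r₁^{d₁} · τ_{d₂} r₂^{d₂} = V such that for every pair of bounded nonempty open connected sets Ω₁ ⊆ ℝ^{d₁}, Ω₂ ⊆ ℝ^{d₂} with |Ω₁||Ω₂| = V one has λ₁( B^{d₁}(0,r₁) × B^{d₂}(0,r₂) ) ≤ λ₁(Ω₁ × Ω₂), where B^{d₁}(0,r₁) and B^{d₂}(0,r₂) are the open balls of radii r₁, r₂ centered at the origins of ℝ^{d₁} and ℝ^{d₂}. -/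
open MeasureTheory Set Filter

/-- `τ_d = π^{d/2}/Γ(1+d/2)`, the volume of the unit ball in `ℝ^d`. -/
noncomputable def tau (d : ℕ) : ℝ := Real.pi ^ ((d : ℝ) / 2) / Real.Gamma (1 + (d : ℝ) / 2)

section Part1
open MeasureTheory Set Filter
open scoped Pointwise

lemma bm1_compact {K L C : Set ℝ} (hK : IsCompact K) (hL : IsCompact L) (hKn : K.Nonempty)
    (hLn : L.Nonempty) (hC : ∀ x ∈ K, ∀ y ∈ L, x + y ∈ C) :
    volume K + volume L ≤ volume C := by
  obtain ⟨M, hM, hMm⟩ := hK.exists_isGreatest hKn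
  obtain ⟨m, hm, hmm⟩ := hL.exists_isLeast hLn
  have h1 : volume ((fun x => x + (-m)) ⁻¹' K) = volume K := measure_preimage_add_right _ _ _
  have h2 : volume ((fun x => x + (-M)) ⁻¹' L) = volume L := measure_preimage_add_right _ _ _
  rw [← h1, ← h2, ← measure_union₀]
  · apply measure_mono
    rintro z (hz | hz)
    · have := hC _ hz _ hm
      simpa using this
    · have := hC _ hM _ hz
      simpa using this
  · exact (hL.measurableSet.preimage (by fun_prop)).nullMeasurableSet
  · refine measure_mono_null (t := {M + m}) ?_ (by simp)
    rintro z ⟨hz1, hz2⟩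
    have a := hMm hz1
    have b := hmm hz2
    simp only at a b
    simp only [mem_singleton_iff]
    linarith

lemma bm1 {A B C : Set ℝ} (hA : MeasurableSet A) (hB : MeasurableSet B) (hAn : A.Nonempty)
    (hBn : B.Nonempty) (hC : ∀ x ∈ A, ∀ y ∈ B, x + y ∈ C) :
    volume A + volume B ≤ volume C := by
  obtain ⟨a, ha⟩ := hAn
  obtain ⟨b, hb⟩ := hBn
  rw [hA.measure_eq_iSup_isCompact, hB.measure_eq_iSup_isCompact]
  simp only [iSup_and']
  refine ENNReal.biSup_add_biSup_le' (p := fun K => K ⊆ A ∧ IsCompact K)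
    (q := fun K => K ⊆ B ∧ IsCompact K) ⟨∅, by simp⟩ ⟨∅, by simp⟩ ?_
  rintro K ⟨hKA, hK⟩ L ⟨hLB, hL⟩
  calc volume K + volume L ≤ volume (insert a K) + volume (insert b L) := by
        gcongr <;> exact subset_insert _ _
    _ ≤ _ := bm1_compact (hK.insert a) (hL.insert b) ⟨a, by simp⟩ ⟨b, by simp⟩ (by
        intro x hx y hy
        refine hC x (insert_subset ha hKA hx) y (insert_subset hb hLB hy))

lemma bm1_weighted {A B C : Set ℝ} {l : ℝ} (hl0 : 0 < l) (hl1 : l < 1)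
    (hA : MeasurableSet A) (hB : MeasurableSet B) (hAn : A.Nonempty)
    (hBn : B.Nonempty) (hC : ∀ x ∈ A, ∀ y ∈ B, (1 - l) * x + l * y ∈ C) :
    ENNReal.ofReal (1 - l) * volume A + ENNReal.ofReal l * volume B ≤ volume C := by
  have e1 : volume ((1 - l) • A) = ENNReal.ofReal (1 - l) * volume A := by
    rw [Measure.addHaar_smul]; simp [abs_of_pos (sub_pos.2 hl1)]
  have e2 : volume (l • B) = ENNReal.ofReal l * volume B := by
    rw [Measure.addHaar_smul]; simp [abs_of_pos hl0]
  rw [← e1, ← e2]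
  apply bm1 (hA.const_smul₀ _) (hB.const_smul₀ _) hAn.smul_set hBn.smul_set
  rintro _ ⟨x, hx, rfl⟩ _ ⟨y, hy, rfl⟩
  exact hC x hx y hy

lemma pl1_real {f g h : ℝ → ℝ} {l : ℝ} (hl0 : 0 < l) (hl1 : l < 1)
    (hf : Measurable f) (hg : Measurable g) (hh : Measurable h)
    (hf0 : ∀ x, 0 ≤ f x) (hg0 : ∀ x, 0 ≤ g x) (hh0 : ∀ x, 0 ≤ h x)
    (hf1 : ∀ x, f x ≤ 1) (hg1 : ∀ x, g x ≤ 1)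
    (hf2 : ∀ t < 1, ∃ x, t < f x) (hg2 : ∀ t < 1, ∃ x, t < g x)
    (H : ∀ t > 0, ∀ x y, t < f x → t < g y → t < h ((1 - l) * x + l * y)) :
    ENNReal.ofReal (1 - l) * (∫⁻ x, ENNReal.ofReal (f x)) + ENNReal.ofReal l *
      (∫⁻ x, ENNReal.ofReal (g x)) ≤ ∫⁻ x, ENNReal.ofReal (h x) := by
  rw [lintegral_eq_lintegral_meas_lt _ (Eventually.of_forall hf0) hf.aemeasurable,
    lintegral_eq_lintegral_meas_lt _ (Eventually.of_forall hg0) hg.aemeasurable,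
    lintegral_eq_lintegral_meas_lt _ (Eventually.of_forall hh0) hh.aemeasurable]
  rw [← lintegral_const_mul' _ _ ENNReal.ofReal_ne_top, ← lintegral_const_mul' _ _ ENNReal.ofReal_ne_top]
  rw [← lintegral_add_left']
  · refine setLIntegral_mono' measurableSet_Ioi ?_
    intro t ht
    rcases lt_or_ge t 1 with h1 | h1
    · exact bm1_weighted hl0 hl1 (measurableSet_lt measurable_const hf)
        (measurableSet_lt measurable_const hg) (hf2 t h1) (hg2 t h1)
        (fun x hx y hy => H t ht x y hx hy)
    · have e1 : {a | t < f a} = ∅ := by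
        ext a; simp; exact (hf1 a).trans h1
      have e2 : {a | t < g a} = ∅ := by
        ext a; simp; exact (hg1 a).trans h1
      simp [e1, e2]
  · apply Measurable.aemeasurable
    apply Measurable.const_mul
    apply Antitone.measurable
    intro a b hab
    exact measure_mono (fun x hx => lt_of_le_of_lt hab hx)

lemma ennreal_geom_le_arith (a b : ENNReal) {l : ℝ} (hl0 : 0 < l) (hl1 : l < 1) :
    a ^ (1 - l) * b ^ l ≤ ENNReal.ofReal (1 - l) * a + ENNReal.ofReal l * b := by
  have h1 : 0 < 1 - l := by linarith
  by_cases ha : a = ⊤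
  · subst ha; rw [ENNReal.mul_top (by simpa using h1)]; simp
  by_cases hb : b = ⊤
  · subst hb; rw [ENNReal.mul_top (by simpa using hl0)]; simp
  lift a to NNReal using ha
  lift b to NNReal using hb
  have := NNReal.geom_mean_le_arith_mean2_weighted (Real.toNNReal (1 - l)) (Real.toNNReal l) a b
    (by rw [← Real.toNNReal_add h1.le hl0.le]; simp)
  rw [Real.coe_toNNReal _ h1.le, Real.coe_toNNReal _ hl0.le] at this
  rw [← ENNReal.coe_rpow_of_nonneg _ h1.le, ← ENNReal.coe_rpow_of_nonneg _ hl0.le,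
    ENNReal.ofReal, ENNReal.ofReal]
  exact_mod_cast this

end Part1

section Part2
open MeasureTheory Set Filter
open scoped Pointwise

lemma ennreal_pow_div {a b F G : ENNReal} {l : ℝ} (hl0 : 0 < l) (hl1 : l < 1)
    (hF : F ≠ 0) (hF' : F ≠ ⊤) :
    (a / F) ^ (1 - l) * (b / G) ^ l = (a ^ (1 - l) * b ^ l) / (F ^ (1 - l) * G ^ l) := by
  have h1 : 0 < 1 - l := by linarith
  rw [ENNReal.div_rpow_of_nonneg _ _ h1.le, ENNReal.div_rpow_of_nonneg _ _ hl0.le]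
  rw [ENNReal.mul_div_mul_comm]
  · left
    simp [ENNReal.rpow_eq_zero_iff, hF, hF']
  · left
    simp [ENNReal.rpow_eq_top_iff, hF, hF']

lemma bm_prod (n : ℕ) {l : ℝ} (hl0 : 0 < l) (hl1 : l < 1)
    (IH : ∀ A B C : Set (Fin n → ℝ), MeasurableSet A → MeasurableSet B → MeasurableSet C →
      Bornology.IsBounded A → Bornology.IsBounded B →
      (∀ x ∈ A, ∀ y ∈ B, (1 - l) • x + l • y ∈ C) →
      volume A ^ (1 - l) * volume B ^ l ≤ volume C)
    (A B C : Set (ℝ × (Fin n → ℝ))) (hA : MeasurableSet A) (hB : MeasurableSet B)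
    (hC : MeasurableSet C) (hAb : Bornology.IsBounded A) (hBb : Bornology.IsBounded B)
    (H : ∀ x ∈ A, ∀ y ∈ B, (1 - l) • x + l • y ∈ C) :
    volume A ^ (1 - l) * volume B ^ l ≤ volume C := by
  have h1 : 0 < 1 - l := by linarith
  have bdsec : ∀ A : Set (ℝ × (Fin n → ℝ)), Bornology.IsBounded A → ∀ x,
      Bornology.IsBounded (Prod.mk x ⁻¹' A) := by
    intro A hA x
    refine hA.image_snd.subset ?_
    intro y hy
    exact ⟨(x, y), hy, rfl⟩
  have bdsup : ∀ A : Set (ℝ × (Fin n → ℝ)), Bornology.IsBounded A →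
      (⨆ x, volume (Prod.mk x ⁻¹' A)) ≠ ⊤ := by
    intro A hA
    apply ne_top_of_le_ne_top (b := volume (Prod.snd '' A)) hA.image_snd.measure_lt_top.ne
    refine iSup_le fun x => measure_mono ?_
    intro y hy
    exact ⟨(x, y), hy, rfl⟩
  have vA : volume A = ∫⁻ x, volume (Prod.mk x ⁻¹' A) := Measure.prod_apply hA
  have vB : volume B = ∫⁻ x, volume (Prod.mk x ⁻¹' B) := Measure.prod_apply hB
  have vC : volume C = ∫⁻ x, volume (Prod.mk x ⁻¹' C) := Measure.prod_apply hC
  have ma : Measurable fun x => volume (Prod.mk x ⁻¹' A) := measurable_measure_prodMk_left hA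
  have mb : Measurable fun x => volume (Prod.mk x ⁻¹' B) := measurable_measure_prodMk_left hB
  have mc : Measurable fun x => volume (Prod.mk x ⁻¹' C) := measurable_measure_prodMk_left hC
  have hF' := bdsup A hAb
  have hG' := bdsup B hBb
  have habc : ∀ x y, volume (Prod.mk x ⁻¹' A) ^ (1 - l) * volume (Prod.mk y ⁻¹' B) ^ l ≤
      volume (Prod.mk ((1 - l) * x + l * y) ⁻¹' C) := by
    intro x y
    refine IH _ _ _ (measurable_prodMk_left hA) (measurable_prodMk_left hB)
      (measurable_prodMk_left hC) (bdsec A hAb x) (bdsec B hBb y) ?_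
    intro u hu v hv
    exact H (x, u) hu (y, v) hv
  set a := fun x => volume (Prod.mk x ⁻¹' A) with ha
  set b := fun x => volume (Prod.mk x ⁻¹' B) with hb
  set c := fun x => volume (Prod.mk x ⁻¹' C) with hc
  set F := ⨆ x, a x with hFdef
  set G := ⨆ x, b x with hGdef
  by_cases hF : F = 0
  · have : volume A = 0 := by
      have hz : ∀ x, a x = 0 := ENNReal.iSup_eq_zero.1 hF
      exact vA.trans ((lintegral_congr hz).trans lintegral_zero)
    rw [this, ENNReal.zero_rpow_of_pos h1]; simp
  by_cases hG : G = 0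
  · have : volume B = 0 := by
      have hz : ∀ x, b x = 0 := ENNReal.iSup_eq_zero.1 hG
      exact vB.trans ((lintegral_congr hz).trans lintegral_zero)
    rw [this, ENNReal.zero_rpow_of_pos hl0]; simp
  set K := F ^ (1 - l) * G ^ l with hK
  have hK0 : K ≠ 0 := by
    simp [hK, ENNReal.rpow_eq_zero_iff, hF, hF', hG, hG']
  have hKt : K ≠ ⊤ := by
    apply ENNReal.mul_ne_top
    · simp [ENNReal.rpow_eq_top_iff, hF, hF']
    · simp [ENNReal.rpow_eq_top_iff, hG, hG']
  have aF : ∀ x, a x / F ≤ 1 := fun x => ENNReal.div_le_of_le_mul (by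
    rw [one_mul]; exact le_iSup a x)
  have bG : ∀ x, b x / G ≤ 1 := fun x => ENNReal.div_le_of_le_mul (by
    rw [one_mul]; exact le_iSup b x)
  have aFt : ∀ x, a x / F ≠ ⊤ := fun x => ne_top_of_le_ne_top ENNReal.one_ne_top (aF x)
  have bGt : ∀ x, b x / G ≠ ⊤ := fun x => ne_top_of_le_ne_top ENNReal.one_ne_top (bG x)
  have cKt : ∀ x, min (c x / K) 1 ≠ ⊤ := fun x =>
    ne_top_of_le_ne_top ENNReal.one_ne_top (min_le_right _ _)
  have supl : ∀ (a : ℝ → ENNReal) (F : ENNReal), F = ⨆ x, a x → F ≠ 0 → F ≠ ⊤ →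
      (∀ x, a x / F ≠ ⊤) → ∀ t < (1:ℝ), ∃ x, t < (a x / F).toReal := by
    intro a F hFa hF hF' hat t ht
    rcases lt_or_ge t 0 with ht0 | ht0
    · exact ⟨0, ht0.trans_le ENNReal.toReal_nonneg⟩
    have : ENNReal.ofReal t * F < F := by
      conv_rhs => rw [← one_mul F]
      apply ENNReal.mul_lt_mul_left hF hF' 
      simpa using ht
    conv_rhs at this => rw [hFa]
    obtain ⟨x, hx⟩ := lt_iSup_iff.1 this
    refine ⟨x, ?_⟩
    rw [← ENNReal.ofReal_lt_iff_lt_toReal ht0 (hat x)]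
    exact (ENNReal.lt_div_iff_mul_lt (Or.inl hF) (Or.inl hF')).2 hx
  have main := pl1_real (f := fun x => (a x / F).toReal) (g := fun x => (b x / G).toReal)
    (h := fun x => (min (c x / K) 1).toReal) hl0 hl1
    (ma.div_const _).ennreal_toReal (mb.div_const _).ennreal_toReal
    ((mc.div_const _).min measurable_const).ennreal_toReal
    (fun _ => ENNReal.toReal_nonneg) (fun _ => ENNReal.toReal_nonneg)
    (fun _ => ENNReal.toReal_nonneg)
    (fun x => ENNReal.toReal_le_of_le_ofReal zero_le_one (by simpa using aF x))
    (fun x => ENNReal.toReal_le_of_le_ofReal zero_le_one (by simpa using bG x))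
    (supl a F hFdef hF hF' aFt) (supl b G hGdef hG hG' bGt) (by
      intro t ht x y hx hy
      have hx' : ENNReal.ofReal t < a x / F := (ENNReal.ofReal_lt_iff_lt_toReal ht.le (aFt x)).2 hx
      have hy' : ENNReal.ofReal t < b y / G := (ENNReal.ofReal_lt_iff_lt_toReal ht.le (bGt y)).2 hy
      refine (ENNReal.ofReal_lt_iff_lt_toReal ht.le (cKt _)).1 ?_
      refine lt_min ?_ (hx'.trans_le (aF x))
      calc ENNReal.ofReal t = ENNReal.ofReal t ^ (1 - l) * ENNReal.ofReal t ^ l := by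
            rw [← ENNReal.rpow_add _ _ (by simpa using ht) ENNReal.ofReal_ne_top]; simp
        _ < (a x / F) ^ (1 - l) * (b y / G) ^ l :=
            ENNReal.mul_lt_mul (ENNReal.rpow_lt_rpow hx' h1) (ENNReal.rpow_lt_rpow hy' hl0)
        _ = _ := ennreal_pow_div hl0 hl1 hF hF'
        _ ≤ _ := by
          gcongr
          exact habc x y)
  simp only [ENNReal.ofReal_toReal (aFt _), ENNReal.ofReal_toReal (bGt _),
    ENNReal.ofReal_toReal (cKt _)] at main
  have m2 : ∫⁻ x, min (c x / K) 1 ≤ (∫⁻ x, c x) / K := by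
    calc ∫⁻ x, min (c x / K) 1 ≤ ∫⁻ x, c x * K⁻¹ := lintegral_mono fun x => min_le_left _ _
      _ = _ := by rw [lintegral_mul_const _ mc, div_eq_mul_inv]
  have m3 : ∫⁻ x, a x / F = volume A / F := by
    simp only [div_eq_mul_inv]; rw [lintegral_mul_const _ ma, vA]
  have m4 : ∫⁻ x, b x / G = volume B / G := by
    simp only [div_eq_mul_inv]; rw [lintegral_mul_const _ mb, vB]
  rw [← vC] at m2
  rw [m3, m4] at main
  have := (ennreal_geom_le_arith (volume A / F) (volume B / G) hl0 hl1).trans (main.trans m2)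
  rw [ennreal_pow_div hl0 hl1 hF hF'] at this
  rw [div_eq_mul_inv, div_eq_mul_inv] at this
  exact (ENNReal.mul_le_mul_iff_left (ENNReal.inv_ne_zero.2 hKt) (ENNReal.inv_ne_top.2 hK0)).1 this

theorem bm_pi (n : ℕ) {l : ℝ} (hl0 : 0 < l) (hl1 : l < 1) :
    ∀ A B C : Set (Fin n → ℝ), MeasurableSet A → MeasurableSet B → MeasurableSet C →
      Bornology.IsBounded A → Bornology.IsBounded B →
      (∀ x ∈ A, ∀ y ∈ B, (1 - l) • x + l • y ∈ C) →
      volume A ^ (1 - l) * volume B ^ l ≤ volume C := by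
  induction n with
  | zero =>
    intro A B C hA hB hC _ _ H
    rcases A.eq_empty_or_nonempty with rfl | ⟨x, hx⟩
    · rw [measure_empty, ENNReal.zero_rpow_of_pos (by linarith)]; simp
    rcases B.eq_empty_or_nonempty with rfl | ⟨y, hy⟩
    · rw [measure_empty, ENNReal.zero_rpow_of_pos (by linarith)]; simp
    have hAu : A = univ := Subsingleton.eq_univ_of_nonempty ⟨x, hx⟩
    have hBu : B = univ := Subsingleton.eq_univ_of_nonempty ⟨y, hy⟩
    have hCu : C = univ := Subsingleton.eq_univ_of_nonempty ⟨_, H x hx y hy⟩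
    have : volume (univ : Set (Fin 0 → ℝ)) = 1 := by
      rw [volume_pi, Measure.pi_univ]; simp
    rw [hAu, hBu, hCu, this]; simp
  | succ n ih =>
    intro A B C hA hB hC hAb hBb H
    set e := MeasurableEquiv.piFinSuccAbove (fun _ : Fin (n + 1) => ℝ) 0 with he
    have mp := (volume_preserving_piFinSuccAbove (fun _ : Fin (n + 1) => ℝ) 0).symm
    have key : ∀ S : Set (Fin (n + 1) → ℝ), volume (e.symm ⁻¹' S) = volume S := fun S =>
      mp.measure_preimage_equiv S
    rw [← key A, ← key B, ← key C]
    have bd : ∀ A : Set (Fin (n+1) → ℝ), Bornology.IsBounded A →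
        Bornology.IsBounded (e.symm ⁻¹' A) := by
      intro A hA
      obtain ⟨R, hR⟩ := hA.exists_norm_le
      rw [isBounded_iff_forall_norm_le]
      refine ⟨R, fun x hx => ?_⟩
      have h1 := hR _ hx
      refine le_trans ?_ h1
      rw [Prod.norm_def]
      apply max_le
      · have := norm_le_pi_norm (e.symm x) 0
        simpa [he] using this
      · rw [pi_norm_le_iff_of_nonneg (norm_nonneg _)]
        intro i
        have := norm_le_pi_norm (e.symm x) i.succ
        simpa [he] using this
    refine bm_prod n hl0 hl1 ih _ _ _ (e.symm.measurable hA) (e.symm.measurable hB)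
      (e.symm.measurable hC) (bd A hAb) (bd B hBb) ?_
    intro x hx y hy
    have := H _ hx _ hy
    have e2 : e.symm ((1 - l) • x + l • y) = (1 - l) • e.symm x + l • e.symm y := by
      ext i
      refine Fin.cases ?_ (fun j => ?_) i <;> simp [he]
    rw [mem_preimage, e2]
    exact this

end Part2

section Part3
open MeasureTheory Set Filter
open scoped Pointwise

/-- shorthand for Euclidean space -/
abbrev EE (d : ℕ) := EuclideanSpace ℝ (Fin d)

theorem bm_E (d : ℕ) {l : ℝ} (hl0 : 0 < l) (hl1 : l < 1) (A B C : Set (EE d))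
    (hA : MeasurableSet A) (hB : MeasurableSet B) (hC : MeasurableSet C)
    (hAb : Bornology.IsBounded A) (hBb : Bornology.IsBounded B)
    (H : ∀ x ∈ A, ∀ y ∈ B, (1 - l) • x + l • y ∈ C) :
    volume A ^ (1 - l) * volume B ^ l ≤ volume C := by
  have mp := PiLp.volume_preserving_toLp (Fin d)
  rw [← mp.measure_preimage hA.nullMeasurableSet, ← mp.measure_preimage hB.nullMeasurableSet,
    ← mp.measure_preimage hC.nullMeasurableSet]
  have bd : ∀ A : Set (EE d), Bornology.IsBounded A →
      Bornology.IsBounded ((WithLp.toLp 2 : (Fin d → ℝ) → EE d) ⁻¹' A) := by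
    intro A hA
    obtain ⟨R, hR⟩ := hA.exists_norm_le
    rw [isBounded_iff_forall_norm_le]
    refine ⟨R, fun x hx => ?_⟩
    have h1 := hR _ hx
    rw [pi_norm_le_iff_of_nonneg ((norm_nonneg _).trans h1)]
    intro i
    exact (PiLp.norm_apply_le (WithLp.toLp 2 x : EE d) i).trans h1
  refine bm_pi d hl0 hl1 _ _ _ (mp.measurable hA) (mp.measurable hB) (mp.measurable hC)
    (bd A hAb) (bd B hBb) ?_
  intro x hx y hy
  exact H _ hx _ hy

lemma tau_pos (d : ℕ) : 0 < tau d := by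
  unfold tau
  have : 0 < Real.Gamma (1 + (d : ℝ) / 2) := Real.Gamma_pos_of_pos (by positivity)
  have := Real.pi_pos
  positivity

lemma vol_ball {d : ℕ} (hd : 1 ≤ d) {r : ℝ} (hr : 0 ≤ r) :
    volume (Metric.ball (0 : EE d) r) = ENNReal.ofReal (tau d * r ^ d) := by
  haveI : Nonempty (Fin d) := ⟨⟨0, hd⟩⟩
  rw [EuclideanSpace.volume_ball, ← ENNReal.ofReal_pow hr, ← ENNReal.ofReal_mul (by positivity)]
  congr 1
  simp only [Fintype.card_fin, tau]
  rw [mul_comm, add_comm, Real.sqrt_eq_rpow, ← Real.rpow_natCast, ← Real.rpow_mul Real.pi_pos.le]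
  congr 3
  ring

theorem bm_ball {d : ℕ} (hd : 1 ≤ d) {R h : ℝ} (hR : 0 < R) (hh : 0 < h) (A C : Set (EE d))
    (hA : MeasurableSet A) (hC : MeasurableSet C)
    (hAb : Bornology.IsBounded A) (hv : volume A = volume (Metric.ball (0 : EE d) R))
    (H : ∀ x ∈ A, ∀ y, ‖y‖ < h → x + y ∈ C) :
    volume (Metric.ball (0 : EE d) (R + h)) ≤ volume C := by
  set l := h / (R + h) with hl
  have hRh : 0 < R + h := by positivity
  have hl0 : 0 < l := by positivity
  have hl1 : l < 1 := by rw [hl, div_lt_one hRh]; linarith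
  have hl2 : 1 - l = R / (R + h) := by rw [hl]; field_simp; ring
  have key := bm_E d hl0 hl1 ((1 - l)⁻¹ • A) (Metric.ball 0 (R + h)) C (hA.const_smul₀ _)
    Metric.isOpen_ball.measurableSet hC (hAb.smul₀ _) Metric.isBounded_ball ?_
  · have h1 : volume ((1 - l)⁻¹ • A) = volume (Metric.ball (0 : EE d) (R + h)) := by
      rw [Measure.addHaar_smul, hv, ← Measure.addHaar_smul, smul_ball (by rw [hl2]; positivity)]
      congr 2
      · simp
      · rw [hl2, Real.norm_of_nonneg (by positivity)]; field_simp
    rw [h1, ← ENNReal.rpow_add_of_nonneg _ _ (by linarith) hl0.le] at key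
    simpa using key
  · rintro _ ⟨x, hx, rfl⟩ y hy
    have : (1 - l) • (1 - l)⁻¹ • x = x := by
      rw [smul_smul, mul_inv_cancel₀ (by linarith), one_smul]
    simp only
    rw [this]
    apply H x hx
    rw [norm_smul, Real.norm_of_nonneg hl0.le, hl]
    have : ‖y‖ < R + h := by simpa using hy
    calc h / (R + h) * ‖y‖ < h / (R + h) * (R + h) := by gcongr
      _ = h := by field_simp

end Part3

section Part4
open MeasureTheory Set Filter
open scoped Pointwise

lemma vol_ball_lt {d : ℕ} (hd : 1 ≤ d) {r r' : ℝ} (hr : 0 ≤ r) (hr' : 0 ≤ r') :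
    volume (Metric.ball (0 : EE d) r) < volume (Metric.ball (0 : EE d) r') ↔ r < r' := by
  have hd0 : d ≠ 0 := by omega
  rw [vol_ball hd hr, vol_ball hd hr']
  constructor
  · intro h
    by_contra! h2
    refine absurd h (not_lt.2 (ENNReal.ofReal_le_ofReal ?_))
    have := tau_pos d
    gcongr
  · intro h
    have h3 := tau_pos d
    have h4 : 0 < r' := hr.trans_lt h
    have : r ^ d < r' ^ d := pow_lt_pow_left₀ h hr hd0
    exact (ENNReal.ofReal_lt_ofReal_iff (by positivity)).2 (by gcongr)

lemma vol_ball_le {d : ℕ} (hd : 1 ≤ d) {r r' : ℝ} (hr : 0 ≤ r) (hr' : 0 ≤ r') :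
    volume (Metric.ball (0 : EE d) r) ≤ volume (Metric.ball (0 : EE d) r') ↔ r ≤ r' := by
  rw [← not_lt, vol_ball_lt hd hr' hr, not_lt]

/-- radius of the ball of given measure -/
noncomputable def radv (d : ℕ) (v : ENNReal) : ℝ := (v.toReal / tau d) ^ (1 / (d : ℝ))

lemma radv_nonneg (d : ℕ) (v : ENNReal) : 0 ≤ radv d v := by
  have := tau_pos d
  unfold radv; positivity

lemma vol_radv {d : ℕ} (hd : 1 ≤ d) {v : ENNReal} (hv : v ≠ ⊤) :
    volume (Metric.ball (0 : EE d) (radv d v)) = v := by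
  have := tau_pos d
  have hd0 : (d : ℝ) ≠ 0 := by positivity
  rw [vol_ball hd (radv_nonneg d v), radv, ← Real.rpow_natCast, ← Real.rpow_mul (by positivity)]
  rw [one_div, inv_mul_cancel₀ hd0, Real.rpow_one, mul_div_cancel₀ _ this.ne',
    ENNReal.ofReal_toReal hv]

lemma measure_diff_eq_of_eq {α : Type*} [MeasurableSpace α] {μ : Measure α} {A B : Set α}
    (hA : MeasurableSet A) (hB : MeasurableSet B) (h : μ B = μ A) (ht : μ A ≠ ⊤) :
    μ (B \ A) = μ (A \ B) := by
  have h1 := measure_inter_add_sdiff (μ := μ) A hB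
  have h2 := measure_inter_add_sdiff (μ := μ) B hA
  rw [inter_comm, ← h, ← h2] at h1
  have : μ (B ∩ A) ≠ ⊤ := ne_top_of_le_ne_top ht (measure_mono inter_subset_right)
  exact ((ENNReal.add_right_inj this).1 h1).symm

/-- level sets -/
def lev {d : ℕ} (u : EE d → ℝ) (c : ℝ) : Set (EE d) := {x | c < u x}

/-- symmetric decreasing rearrangement -/
noncomputable def rearr {d : ℕ} (u : EE d → ℝ) (x : EE d) : ℝ :=
  sSup (insert 0 {c | 0 ≤ c ∧ ‖x‖ < radv d (volume (lev u c))})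

lemma lev_sub {d : ℕ} {u : EE d → ℝ} {c : ℝ} (hc0 : 0 ≤ c) : lev u c ⊆ tsupport u := by
  intro x hx
  apply subset_tsupport
  have : c < u x := hx
  simp only [Function.mem_support]; linarith

lemma lev_open {d : ℕ} {u : EE d → ℝ} (hu : Continuous u) (c : ℝ) : IsOpen (lev u c) := isOpen_lt continuous_const hu

lemma lev_ne_top {d : ℕ} {u : EE d → ℝ}
    (hc : HasCompactSupport u) {c : ℝ} (hc0 : 0 ≤ c) : volume (lev u c) ≠ ⊤ :=
  ne_top_of_le_ne_top hc.isCompact.measure_lt_top.ne (measure_mono (lev_sub hc0))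


lemma lev_bdd {d : ℕ} (hd : 1 ≤ d) {u : EE d → ℝ} {M : ℝ} (hM : ∀ x, u x ≤ M) (x : EE d) :
    BddAbove (insert 0 {c | 0 ≤ c ∧ ‖x‖ < radv d (volume (lev u c))}) := by
  apply BddAbove.insert
  refine ⟨M, ?_⟩
  rintro c ⟨_, h⟩
  by_contra! h2
  have : lev u c = ∅ := by
    ext y; simp only [lev, mem_ofPred_eq, mem_empty_iff_false, iff_false, not_lt]
    exact (hM y).trans h2.le
  have hd0 : d ≠ 0 := by omega
  rw [this, measure_empty, radv] at h
  simp [hd0] at h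
  linarith [norm_nonneg x]

lemma exists_bound {d : ℕ} {u : EE d → ℝ} (hu : Continuous u)
    (hc : HasCompactSupport u) : ∃ M, 0 ≤ M ∧ ∀ x, u x ≤ M := by
  obtain ⟨M, hM⟩ := hu.bounded_above_of_compact_support hc
  exact ⟨M, (norm_nonneg _).trans (hM 0), fun x => (le_abs_self _).trans (hM x)⟩

lemma right_cont {d : ℕ} (hd : 1 ≤ d) {u : EE d → ℝ} (hu : Continuous u)
    (hc : HasCompactSupport u) {c r : ℝ} (hc0 : 0 ≤ c) (hr : 0 ≤ r) (h : r < radv d (volume (lev u c))) :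
    ∃ c' > c, r < radv d (volume (lev u c')) := by
  rw [← vol_ball_lt hd hr (radv_nonneg _ _), vol_radv hd (lev_ne_top hc hc0)] at h
  have e : lev u c = ⋃ n : ℕ, lev u (c + 1 / ((n : ℝ) + 1)) := by
    ext x
    simp only [lev, mem_iUnion, mem_ofPred_eq]
    constructor
    · intro hx
      obtain ⟨n, hn⟩ := exists_nat_one_div_lt (sub_pos.2 hx)
      exact ⟨n, by linarith⟩
    · rintro ⟨n, hn⟩
      have : (0:ℝ) < 1 / ((n : ℝ) + 1) := by positivity
      linarith
  have mono : Monotone fun n : ℕ => lev u (c + 1 / ((n : ℝ) + 1)) := by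
    intro m n hmn x hx
    have h1 : 1 / ((n : ℝ) + 1) ≤ 1 / ((m : ℝ) + 1) := one_div_le_one_div_of_le (by positivity)
      (by have : (m : ℝ) ≤ n := by exact_mod_cast hmn
          linarith)
    have hx' : c + 1 / ((m : ℝ) + 1) < u x := hx
    change c + 1 / ((n : ℝ) + 1) < u x
    linarith
  have t := tendsto_measure_iUnion_atTop (μ := volume) mono
  rw [← e] at t
  obtain ⟨n, hn⟩ := (t.eventually (lt_mem_nhds h)).exists
  have hp : (0:ℝ) < 1 / ((n : ℝ) + 1) := by positivity
  refine ⟨c + 1 / ((n : ℝ) + 1), by linarith, ?_⟩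
  rw [← vol_ball_lt hd hr (radv_nonneg _ _), vol_radv hd (lev_ne_top hc (by linarith))]
  exact hn

lemma lt_rearr {d : ℕ} (hd : 1 ≤ d) {u : EE d → ℝ} (hu : Continuous u)
    (hc : HasCompactSupport u) {c : ℝ} (hc0 : 0 ≤ c) (x : EE d) :
    c < rearr u x ↔ ‖x‖ < radv d (volume (lev u c)) := by
  obtain ⟨M, _, hM⟩ := exists_bound hu hc
  have bdd := lev_bdd hd hM x
  constructor
  · intro h
    obtain ⟨c', hc', hlt⟩ := exists_lt_of_lt_csSup (insert_nonempty _ _) h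
    rcases hc' with rfl | ⟨h1, h2⟩
    · linarith
    · refine h2.trans_le ?_
      rw [← vol_ball_le hd (radv_nonneg _ _) (radv_nonneg _ _), vol_radv hd (lev_ne_top hc h1),
        vol_radv hd (lev_ne_top hc hc0)]
      exact measure_mono (fun y hy => hlt.trans hy)
  · intro h
    obtain ⟨c', hc', hlt⟩ := right_cont hd hu hc hc0 (norm_nonneg x) h
    exact hc'.trans_le (le_csSup bdd (Or.inr ⟨hc0.trans hc'.le, hlt⟩))

lemma rearr_nonneg {d : ℕ} (hd : 1 ≤ d) {u : EE d → ℝ} (hu : Continuous u)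
    (hc : HasCompactSupport u) (x : EE d) : 0 ≤ rearr u x := by
  obtain ⟨M, _, hM⟩ := exists_bound hu hc
  exact le_csSup (lev_bdd hd hM x) (mem_insert _ _)

lemma rearr_le {d : ℕ} (hd : 1 ≤ d) {u : EE d → ℝ} (hu : Continuous u)
    (hc : HasCompactSupport u) {M : ℝ} (hM0 : 0 ≤ M) (hM : ∀ x, u x ≤ M) (x : EE d) : rearr u x ≤ M := by
  by_contra! h
  rw [lt_rearr hd hu hc hM0] at h
  have : lev u M = ∅ := by
    ext y; simp only [lev, mem_ofPred_eq, mem_empty_iff_false, iff_false, not_lt]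
    exact (hM y)
  have hd0 : d ≠ 0 := by omega
  rw [this, measure_empty, radv] at h
  simp [hd0] at h
  linarith [norm_nonneg x]

lemma lev_rearr {d : ℕ} (hd : 1 ≤ d) {u : EE d → ℝ} (hu : Continuous u)
    (hc : HasCompactSupport u) {c : ℝ} (hc0 : 0 ≤ c) :
    lev (rearr u) c = Metric.ball 0 (radv d (volume (lev u c))) := by
  ext x
  simp only [lev, mem_ofPred_eq, mem_ball_zero_iff]
  exact lt_rearr hd hu hc hc0 x

lemma vol_lev_rearr {d : ℕ} (hd : 1 ≤ d) {u : EE d → ℝ} (hu : Continuous u)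
    (hc : HasCompactSupport u) {c : ℝ} (hc0 : 0 ≤ c) : volume (lev (rearr u) c) = volume (lev u c) := by
  rw [lev_rearr hd hu hc hc0, vol_radv hd (lev_ne_top hc hc0)]

lemma rearr_lsc {d : ℕ} (hd : 1 ≤ d) {u : EE d → ℝ} (hu : Continuous u)
    (hc : HasCompactSupport u) : LowerSemicontinuous (rearr u) := by
  rw [lowerSemicontinuous_iff_isOpen_preimage]
  intro c
  rcases lt_or_ge c 0 with h | h
  · have : rearr u ⁻¹' Ioi c = univ := by
      ext x; simp only [mem_preimage, mem_Ioi, mem_univ, iff_true]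
      exact h.trans_le (rearr_nonneg hd hu hc x)
    rw [this]; exact isOpen_univ
  · have := lev_rearr hd hu hc h
    change IsOpen (lev (rearr u) c)
    rw [this]; exact Metric.isOpen_ball

lemma rearr_meas {d : ℕ} (hd : 1 ≤ d) {u : EE d → ℝ} (hu : Continuous u)
    (hc : HasCompactSupport u) : Measurable (rearr u) := (rearr_lsc hd hu hc).measurable

lemma rearr_zero {d : ℕ} (hd : 1 ≤ d) {u : EE d → ℝ} (hu : Continuous u)
    (hc : HasCompactSupport u) {x : EE d} (hx : radv d (volume (lev u 0)) ≤ ‖x‖) : rearr u x = 0 := by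
  refine le_antisymm ?_ (rearr_nonneg hd hu hc x)
  by_contra! h
  rw [lt_rearr hd hu hc le_rfl] at h
  linarith

/-- Equimeasurability. -/
lemma lint_rearr {d : ℕ} (hd : 1 ≤ d) {u : EE d → ℝ} (hu : Continuous u)
    (hc : HasCompactSupport u)
    (h0 : ∀ x, 0 ≤ u x) (p : ℝ) (hp : 0 < p) :
    ∫⁻ x, ENNReal.ofReal (rearr u x ^ p) = ∫⁻ x, ENNReal.ofReal (u x ^ p) := by
  rw [lintegral_rpow_eq_lintegral_meas_lt_mul _
      (Eventually.of_forall (rearr_nonneg hd hu hc)) (rearr_meas hd hu hc).aemeasurable hp,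
    lintegral_rpow_eq_lintegral_meas_lt_mul _
      (Eventually.of_forall h0) hu.measurable.aemeasurable hp]
  congr 1
  refine setLIntegral_congr_fun measurableSet_Ioi ?_
  intro t ht
  have := vol_lev_rearr hd hu hc (c := t) (le_of_lt ht)
  simp only [lev] at this
  simp only [this]

/-- Weighted: mass moves inward. -/
lemma lint_rearr_weight {d : ℕ} (hd : 1 ≤ d) {u : EE d → ℝ} (hu : Continuous u)
    (hc : HasCompactSupport u)
    (h0 : ∀ x, 0 ≤ u x) {w : ℝ → ENNReal} (hw : Monotone w) (p : ℝ) (hp : 0 < p) :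
    ∫⁻ x, w ‖x‖ * ENNReal.ofReal (rearr u x ^ p) ≤ ∫⁻ x, w ‖x‖ * ENNReal.ofReal (u x ^ p) := by
  have mw : Measurable fun x : EE d => w ‖x‖ := hw.measurable.comp measurable_norm
  have e : ∀ f : EE d → ENNReal, Measurable f → ∫⁻ x, w ‖x‖ * f x =
      ∫⁻ x, f x ∂(volume.withDensity fun x => w ‖x‖) := by
    intro f hf
    rw [lintegral_withDensity_eq_lintegral_mul _ mw hf]; rfl
  have m1 : Measurable (rearr u) := rearr_meas hd hu hc
  have m2 : Measurable u := hu.measurable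
  rw [e _ (by fun_prop), e _ (by fun_prop)]
  rw [lintegral_rpow_eq_lintegral_meas_lt_mul _
      (Eventually.of_forall (rearr_nonneg hd hu hc)) (rearr_meas hd hu hc).aemeasurable hp,
    lintegral_rpow_eq_lintegral_meas_lt_mul _
      (Eventually.of_forall h0) hu.measurable.aemeasurable hp]
  gcongr _ * ?_
  refine setLIntegral_mono' measurableSet_Ioi ?_
  intro t ht
  have ht0 : 0 ≤ t := le_of_lt ht
  gcongr ?_ * _
  change (volume.withDensity _) (lev (rearr u) t) ≤ (volume.withDensity _) (lev u t)
  have hv := vol_lev_rearr hd hu hc ht0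
  rw [lev_rearr hd hu hc ht0] at hv ⊢
  set R := radv d (volume (lev u t))
  have mA := (lev_open hu t).measurableSet
  have mB : MeasurableSet (Metric.ball (0 : EE d) R) := Metric.isOpen_ball.measurableSet
  rw [withDensity_apply _ mA, withDensity_apply _ mB]
  rw [← lintegral_inter_add_diff (μ := volume) _ (Metric.ball (0 : EE d) R) mA,
    ← lintegral_inter_add_diff (μ := volume) _ (lev u t) mB, inter_comm (lev u t)]
  refine add_le_add le_rfl ?_
  have hdiff : volume (Metric.ball (0 : EE d) R \ lev u t) = volume (lev u t \ Metric.ball (0 : EE d) R) :=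
    measure_diff_eq_of_eq mA mB hv (lev_ne_top hc ht0)
  calc ∫⁻ x in Metric.ball (0 : EE d) R \ lev u t, w ‖x‖
      ≤ ∫⁻ x in Metric.ball (0 : EE d) R \ lev u t, w R := by
        refine setLIntegral_mono' (mB.diff mA) ?_
        intro x hx
        exact hw (mem_ball_zero_iff.1 hx.1).le
    _ = ∫⁻ x in lev u t \ Metric.ball (0 : EE d) R, w R := by simp [hdiff]
    _ ≤ _ := by
        refine setLIntegral_mono' (mA.diff mB) ?_
        intro x hx
        exact hw (by simpa using hx.2)

end Part4

section Part5
open MeasureTheory Set Filter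
open scoped Pointwise

/-- sup-convolution with a parabola -/
noncomputable def supc {d : ℕ} (t : ℝ) (f : EE d → ℝ) (x : EE d) : ENNReal :=
  ⨆ y, ENNReal.ofReal (f y - ‖x - y‖ ^ 2 / (2 * t))

lemma le_supc {d : ℕ} (t : ℝ) (f : EE d → ℝ) (x y : EE d) :
    ENNReal.ofReal (f y - ‖x - y‖ ^ 2 / (2 * t)) ≤ supc t f x :=
  le_iSup (fun y => ENNReal.ofReal (f y - ‖x - y‖ ^ 2 / (2 * t))) y

lemma supc_lsc {d : ℕ} (t : ℝ) (f : EE d → ℝ) : LowerSemicontinuous (supc t f) := by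
  unfold supc
  apply lowerSemicontinuous_iSup
  intro y
  apply Continuous.lowerSemicontinuous
  exact ENNReal.continuous_ofReal.comp (by fun_prop)

lemma supc_lev {d : ℕ} (t : ℝ) (f : EE d → ℝ) {c : ℝ} (hc : 0 ≤ c) (x : EE d) :
    ENNReal.ofReal c < supc t f x ↔ ∃ y, c + ‖x - y‖ ^ 2 / (2 * t) < f y := by
  unfold supc
  rw [lt_iSup_iff]
  refine exists_congr fun y => ?_
  rw [ENNReal.ofReal_lt_ofReal_iff_of_nonneg hc]
  constructor <;> intro h <;> linarith

lemma supc_le {d : ℕ} {t : ℝ} (ht : 0 < t) {f : EE d → ℝ} {M : ℝ} (hM : ∀ x, f x ≤ M) (x : EE d) :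
    supc t f x ≤ ENNReal.ofReal M := by
  refine iSup_le fun y => ENNReal.ofReal_le_ofReal ?_
  have : 0 ≤ ‖x - y‖ ^ 2 / (2 * t) := by positivity
  linarith [hM y]

lemma supc_rearr_lev {d : ℕ} (hd : 1 ≤ d) {u : EE d → ℝ} (hu : Continuous u)
    (hc : HasCompactSupport u) {t c : ℝ} (ht : 0 < t) (hc0 : 0 ≤ c) :
    volume {x | ENNReal.ofReal c < supc t (rearr u) x} ≤
      volume {x | ENNReal.ofReal c < supc t u x} := by
  set S := {x | ENNReal.ofReal c < supc t u x} with hS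
  have hSo : IsOpen S := (supc_lsc t u).isOpen_preimage _
  by_cases hSt : volume S = ⊤
  · rw [hSt]; exact le_top
  rw [← vol_radv hd hSt]
  apply measure_mono
  intro x hx
  obtain ⟨y, hy⟩ := (supc_lev t _ hc0 x).1 hx
  set h := ‖x - y‖ with hh
  have hc1 : 0 ≤ c + h ^ 2 / (2 * t) := by positivity
  rw [lt_rearr hd hu hc hc1] at hy
  set R := radv d (volume (lev u (c + h ^ 2 / (2 * t)))) with hR
  have hR0 : 0 < R := (norm_nonneg y).trans_lt hy
  have hlt : ‖x‖ < R + h := by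
    have : ‖x‖ ≤ ‖x - y‖ + ‖y‖ := norm_le_norm_sub_add x y
    linarith
  rw [mem_ball_zero_iff]
  refine hlt.trans_le ?_
  have hh0 : 0 ≤ h := norm_nonneg _
  rw [← vol_ball_le hd (by linarith) (radv_nonneg _ _), vol_radv hd hSt]
  have hvR := (vol_radv hd (lev_ne_top hc hc1)).symm
  rcases hh0.eq_or_lt with h0 | h0
  · rw [← h0, add_zero, hR, vol_radv hd (lev_ne_top hc hc1)]
    apply measure_mono
    intro z hz
    refine (supc_lev t u hc0 z).2 ⟨z, ?_⟩
    have hz' : c + h ^ 2 / (2 * t) < u z := hz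
    rw [← h0] at hz'
    simpa using hz'
  · refine bm_ball hd hR0 h0 _ S (lev_open hu _).measurableSet hSo.measurableSet
      (hc.isCompact.isBounded.subset (lev_sub hc1)) hvR ?_
    intro z hz w hw
    refine (supc_lev t u hc0 _).2 ⟨z, ?_⟩
    have hz' : c + h ^ 2 / (2 * t) < u z := hz
    refine lt_of_le_of_lt ?_ hz'
    have : z + w - z = w := by abel
    rw [this]
    gcongr

lemma lint_layer {d : ℕ} {F : EE d → ENNReal} (hF : Measurable F) {M : ℝ}
    (hM : ∀ x, F x ≤ ENNReal.ofReal M) :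
    ∫⁻ x, F x = ∫⁻ c in Ioi (0:ℝ), volume {x | ENNReal.ofReal c < F x} := by
  have hFt : ∀ x, F x ≠ ⊤ := fun x => ne_top_of_le_ne_top ENNReal.ofReal_ne_top (hM x)
  have e : ∫⁻ x, F x = ∫⁻ x, ENNReal.ofReal ((F x).toReal) :=
    lintegral_congr fun x => (ENNReal.ofReal_toReal (hFt x)).symm
  rw [e, lintegral_eq_lintegral_meas_lt _ (Eventually.of_forall fun _ => ENNReal.toReal_nonneg)
    hF.ennreal_toReal.aemeasurable]
  refine setLIntegral_congr_fun measurableSet_Ioi ?_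
  intro c hc
  have hc0 : 0 ≤ c := le_of_lt hc
  refine congrArg volume (Set.ext fun x => ?_)
  exact (ENNReal.ofReal_lt_iff_lt_toReal hc0 (hFt x)).symm

lemma supc_rearr {d : ℕ} (hd : 1 ≤ d) {u : EE d → ℝ} (hu : Continuous u)
    (hc : HasCompactSupport u) {t : ℝ} (ht : 0 < t) :
    ∫⁻ x, supc t (rearr u) x ≤ ∫⁻ x, supc t u x := by
  obtain ⟨M, hM0, hM⟩ := exists_bound hu hc
  rw [lint_layer (supc_lsc t u).measurable (supc_le ht hM),
    lint_layer (supc_lsc t (rearr u)).measurable (supc_le ht (rearr_le hd hu hc hM0 hM))]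
  refine setLIntegral_mono' measurableSet_Ioi ?_
  intro c hc'
  exact supc_rearr_lev hd hu hc ht (le_of_lt hc')

lemma ofReal_integral_le {α : Type*} [MeasurableSpace α] {μ : Measure α} (f : α → ℝ)
    (hf : Integrable f μ) : ENNReal.ofReal (∫ x, f x ∂μ) ≤ ∫⁻ x, ENNReal.ofReal (f x) ∂μ := by
  rw [integral_eq_lintegral_pos_part_sub_lintegral_neg_part hf]
  refine (ENNReal.ofReal_le_ofReal (sub_le_self _ ENNReal.toReal_nonneg)).trans ?_
  exact ENNReal.ofReal_toReal_le

lemma supc_conv {d : ℕ} {f ρ g : EE d → ℝ} (hf : Measurable f) {M : ℝ} (hM : ∀ x, |f x| ≤ M)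
    (hρ0 : ∀ x, 0 ≤ ρ x) (hρi : Integrable ρ) (hρ1 : ∫ x, ρ x = 1)
    (hg : ∀ x, g x = ∫ z, ρ z * f (x - z)) (t : ℝ) :
    ∫⁻ x, supc t g x ≤ ∫⁻ x, supc t f x := by
  have hintg : ∀ y, Integrable fun z => ρ z * f (y - z) := by
    intro y
    refine hρi.mul_bdd (c := M) (hf.comp (by fun_prop)).aestronglyMeasurable ?_
    exact Eventually.of_forall fun z => hM _
  have pt : ∀ x, supc t g x ≤ ∫⁻ z, ENNReal.ofReal (ρ z) * supc t f (x - z) := by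
    intro x
    refine iSup_le fun y => ?_
    have e : g y - ‖x - y‖ ^ 2 / (2 * t) = ∫ z, ρ z * (f (y - z) - ‖x - y‖ ^ 2 / (2 * t)) := by
      simp only [mul_sub]
      rw [integral_sub (hintg y) (hρi.mul_const _), integral_mul_const, hρ1, hg, one_mul]
    rw [e]
    refine (ofReal_integral_le _ ?_).trans ?_
    · simp only [mul_sub]
      exact (hintg y).sub (hρi.mul_const _)
    · refine lintegral_mono fun z => ?_
      rw [ENNReal.ofReal_mul (hρ0 z)]
      gcongr
      have h2 := le_supc t f (x - z) (y - z)
      rwa [show x - z - (y - z) = x - y by abel] at h2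
  have hmeas : Measurable (supc t f) := (supc_lsc t f).measurable
  calc ∫⁻ x, supc t g x ≤ ∫⁻ x, ∫⁻ z, ENNReal.ofReal (ρ z) * supc t f (x - z) := lintegral_mono pt
    _ = ∫⁻ z, ∫⁻ x, ENNReal.ofReal (ρ z) * supc t f (x - z) := by
        apply lintegral_lintegral_swap
        apply AEMeasurable.mul
        · exact (hρi.aestronglyMeasurable.aemeasurable.comp_quasiMeasurePreserving
            Measure.quasiMeasurePreserving_snd).ennreal_ofReal
        · exact (hmeas.comp (by fun_prop)).aemeasurable
    _ = ∫⁻ z, ENNReal.ofReal (ρ z) * ∫⁻ x, supc t f x := by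
        refine lintegral_congr fun z => ?_
        rw [lintegral_const_mul' _ _ ENNReal.ofReal_ne_top, lintegral_sub_right_eq_self]
    _ = (∫⁻ z, ENNReal.ofReal (ρ z)) * ∫⁻ x, supc t f x := by
        rw [lintegral_mul_const'' _ hρi.aestronglyMeasurable.aemeasurable.ennreal_ofReal]
    _ = _ := by
        rw [← ofReal_integral_eq_lintegral_ofReal hρi (Eventually.of_forall hρ0), hρ1]; simp

lemma taylor_bound {d : ℕ} {φ : EE d → ℝ} (h : ContDiff ℝ (⊤ : ℕ∞) φ) (hc : HasCompactSupport φ) :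
    ∃ K : ℝ, 0 ≤ K ∧ ∀ x y, |φ y - φ x - fderiv ℝ φ x (y - x)| ≤ K * ‖y - x‖ ^ 2 := by
  have h1 : ContDiff ℝ 1 (fderiv ℝ φ) := h.fderiv_right (by norm_cast)
  obtain ⟨K, hK⟩ := ContDiff.lipschitzWith_of_hasCompactSupport (hc.fderiv ℝ) h1 one_ne_zero
  refine ⟨K, K.2, fun x y => ?_⟩
  have hdiff : Differentiable ℝ φ := h.differentiable (by simp)
  have := (convex_segment x y).norm_image_sub_le_of_norm_fderiv_le' (𝕜 := ℝ) (f := φ)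
    (φ := fderiv ℝ φ x) (C := K * ‖y - x‖) (fun z _ => hdiff z) (by
      intro z hz
      refine (hK.norm_sub_le z x).trans ?_
      gcongr
      rw [segment_eq_image'] at hz
      obtain ⟨θ, hθ, rfl⟩ := hz
      simp only [add_sub_cancel_left, norm_smul, Real.norm_eq_abs, abs_of_nonneg hθ.1]
      exact mul_le_of_le_one_left (norm_nonneg _) hθ.2) (left_mem_segment ℝ x y)
      (right_mem_segment ℝ x y)
  rw [← Real.norm_eq_abs]
  refine this.trans (le_of_eq (by ring))

lemma supc_abs_upper {d : ℕ} {φ : EE d → ℝ} {K t : ℝ} (ht : 0 < t) (hKt : 2 * K * t < 1)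
    (hK : ∀ x y, |φ y - φ x - fderiv ℝ φ x (y - x)| ≤ K * ‖y - x‖ ^ 2) (x : EE d) :
    supc t (fun y => |φ y|) x ≤
      ENNReal.ofReal (|φ x| + t / (2 * (1 - 2 * K * t)) * ‖fderiv ℝ φ x‖ ^ 2) := by
  refine iSup_le fun y => ENNReal.ofReal_le_ofReal ?_
  have h1 := hK x y
  have h2 : |fderiv ℝ φ x (y - x)| ≤ ‖fderiv ℝ φ x‖ * ‖y - x‖ := (fderiv ℝ φ x).le_opNorm _
  have h3 : |φ y| ≤ |φ x| + ‖fderiv ℝ φ x‖ * ‖y - x‖ + K * ‖y - x‖ ^ 2 := by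
    have : φ y = φ x + fderiv ℝ φ x (y - x) + (φ y - φ x - fderiv ℝ φ x (y - x)) := by ring
    calc |φ y| = |φ x + fderiv ℝ φ x (y - x) + (φ y - φ x - fderiv ℝ φ x (y - x))| := by rw [← this]
      _ ≤ |φ x| + |fderiv ℝ φ x (y - x)| + |(φ y - φ x - fderiv ℝ φ x (y - x))| := abs_add_three _ _ _
      _ ≤ _ := by gcongr
  rw [norm_sub_rev x y]
  set a := ‖fderiv ℝ φ x‖
  set h := ‖y - x‖
  have hq : 0 < 1 - 2 * K * t := by linarith
  set q := 1 - 2 * K * t with hqd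
  have key : a * h + K * h ^ 2 - h ^ 2 / (2 * t) ≤ t / (2 * q) * a ^ 2 := by
    have : t / (2 * q) * a ^ 2 - (a * h + K * h ^ 2 - h ^ 2 / (2 * t)) =
        (t * a - q * h) ^ 2 / (2 * q * t) := by
      have hK2 : K = (1 - q) / (2 * t) := by rw [hqd]; field_simp; ring
      rw [hK2]
      field_simp
      ring
    have h5 : 0 ≤ (t * a - q * h) ^ 2 / (2 * q * t) := by positivity
    linarith
  linarith

lemma supc_lower {d : ℕ} {φ : EE d → ℝ} {K t : ℝ} (ht : 0 < t)
    (hK : ∀ x y, |φ y - φ x - fderiv ℝ φ x (y - x)| ≤ K * ‖y - x‖ ^ 2) (x : EE d) :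
      ENNReal.ofReal (φ x + t / 2 * (1 - 2 * K * t) * ‖fderiv ℝ φ x‖ ^ 2) ≤ supc t φ x := by
  set v := (InnerProductSpace.toDual ℝ (EE d)).symm (fderiv ℝ φ x) with hv
  have hvn : ‖v‖ = ‖fderiv ℝ φ x‖ := LinearIsometryEquiv.norm_map _ _
  have hvv : fderiv ℝ φ x v = ‖v‖ ^ 2 := by
    rw [← real_inner_self_eq_norm_sq, hv, InnerProductSpace.toDual_symm_apply]
  refine le_trans (ENNReal.ofReal_le_ofReal ?_) (le_supc t φ x (x + t • v))
  have h1 := (abs_le.1 (hK x (x + t • v))).1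
  have e1 : x + t • v - x = t • v := by abel
  have e2 : x - (x + t • v) = -(t • v) := by abel
  rw [e1, map_smul, hvv, norm_smul, Real.norm_of_nonneg ht.le] at h1
  simp only [smul_eq_mul] at h1
  rw [e2, norm_neg, norm_smul, Real.norm_of_nonneg ht.le, ← hvn]
  have e3 : (t * ‖v‖) ^ 2 / (2 * t) = t / 2 * ‖v‖ ^ 2 := by field_simp
  rw [e3]
  nlinarith

end Part5

section Part6
open MeasureTheory Set Filter Topology
open scoped Pointwise Convolution

/-- mollified rearrangement -/
noncomputable def moll {d : ℕ} (ρ : ContDiffBump (0 : EE d)) (u : EE d → ℝ) : EE d → ℝ :=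
  MeasureTheory.convolution (ρ.normed volume) (rearr u) (ContinuousLinearMap.lsmul ℝ ℝ) volume

lemma moll_apply {d : ℕ} (ρ : ContDiffBump (0 : EE d)) (u : EE d → ℝ) (x : EE d) :
    moll ρ u x = ∫ z, ρ.normed volume z * rearr u (x - z) := by
  simp [moll, MeasureTheory.convolution]

lemma rearr_cs {d : ℕ} (hd : 1 ≤ d) {u : EE d → ℝ} (hu : Continuous u)
    (hc : HasCompactSupport u) : HasCompactSupport (rearr u) := by
  refine HasCompactSupport.intro (isCompact_closedBall 0 (radv d (volume (lev u 0)))) ?_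
  intro x hx
  apply rearr_zero hd hu hc
  simp only [mem_closedBall_zero_iff, not_le] at hx
  exact hx.le

lemma rearr_abs_le {d : ℕ} (hd : 1 ≤ d) {u : EE d → ℝ} (hu : Continuous u)
    (hc : HasCompactSupport u) {M : ℝ} (hM0 : 0 ≤ M) (hM : ∀ x, u x ≤ M) (x : EE d) :
    |rearr u x| ≤ M := by
  rw [abs_of_nonneg (rearr_nonneg hd hu hc x)]
  exact rearr_le hd hu hc hM0 hM x

lemma rearr_int {d : ℕ} (hd : 1 ≤ d) {u : EE d → ℝ} (hu : Continuous u)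
    (hc : HasCompactSupport u) : Integrable (rearr u) := by
  obtain ⟨M, hM0, hM⟩ := exists_bound hu hc
  have h1 : IntegrableOn (rearr u) (Metric.closedBall 0 (radv d (volume (lev u 0)))) := by
    refine Measure.integrableOn_of_bounded (M := M)
      (isCompact_closedBall _ _).measure_lt_top.ne (rearr_meas hd hu hc).aestronglyMeasurable ?_
    exact Eventually.of_forall fun x => rearr_abs_le hd hu hc hM0 hM x
  rw [integrableOn_iff_integrable_of_support_subset] at h1
  · exact h1
  · intro x hx
    by_contra h
    apply hx
    apply rearr_zero hd hu hc
    simp only [mem_closedBall_zero_iff, not_le] at h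
    exact h.le

lemma moll_contDiff {d : ℕ} (hd : 1 ≤ d) {u : EE d → ℝ} (hu : Continuous u)
    (hc : HasCompactSupport u) (ρ : ContDiffBump (0 : EE d)) :
    ContDiff ℝ (⊤ : ℕ∞) (moll ρ u) :=
  ρ.hasCompactSupport_normed.contDiff_convolution_left _ ρ.contDiff_normed
    (rearr_int hd hu hc).locallyIntegrable

lemma moll_zero {d : ℕ} (hd : 1 ≤ d) {u : EE d → ℝ} (hu : Continuous u)
    (hc : HasCompactSupport u) (ρ : ContDiffBump (0 : EE d)) {x : EE d}
    (hx : radv d (volume (lev u 0)) + ρ.rOut ≤ ‖x‖) : moll ρ u x = 0 := by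
  rw [moll_apply]
  rw [← integral_zero (EE d) ℝ]
  congr 1
  ext z
  by_cases hz : ‖z‖ < ρ.rOut
  · rw [rearr_zero hd hu hc, mul_zero]
    have : ‖x‖ - ‖z‖ ≤ ‖x - z‖ := norm_sub_norm_le x z
    linarith
  · have : z ∉ Function.support (ρ.normed volume) := by
      rw [ρ.support_normed_eq]; simpa using hz
    rw [Function.notMem_support.1 this, zero_mul]

lemma moll_tsupport {d : ℕ} (hd : 1 ≤ d) {u : EE d → ℝ} (hu : Continuous u)
    (hc : HasCompactSupport u) (ρ : ContDiffBump (0 : EE d)) :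
    tsupport (moll ρ u) ⊆ Metric.closedBall 0 (radv d (volume (lev u 0)) + ρ.rOut) := by
  apply closure_minimal _ Metric.isClosed_closedBall
  intro x hx
  by_contra h
  apply hx
  apply moll_zero hd hu hc
  simp only [mem_closedBall_zero_iff, not_le] at h
  exact h.le

lemma moll_cs {d : ℕ} (hd : 1 ≤ d) {u : EE d → ℝ} (hu : Continuous u)
    (hc : HasCompactSupport u) (ρ : ContDiffBump (0 : EE d)) : HasCompactSupport (moll ρ u) :=
  HasCompactSupport.of_support_subset_isCompact (isCompact_closedBall 0 _)
    ((subset_tsupport _).trans (moll_tsupport hd hu hc ρ))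

lemma moll_abs_le {d : ℕ} (hd : 1 ≤ d) {u : EE d → ℝ} (hu : Continuous u)
    (hc : HasCompactSupport u) {M : ℝ} (hM0 : 0 ≤ M) (hM : ∀ x, u x ≤ M)
    (ρ : ContDiffBump (0 : EE d)) (x : EE d) : |moll ρ u x| ≤ M := by
  rw [moll_apply, ← Real.norm_eq_abs]
  calc ‖∫ z, ρ.normed volume z * rearr u (x - z)‖ ≤ ∫ z, ρ.normed volume z * M := by
        refine norm_integral_le_of_norm_le (ρ.integrable_normed.mul_const M) ?_
        refine Eventually.of_forall fun z => ?_
        rw [norm_mul, Real.norm_of_nonneg (ρ.nonneg_normed z)]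
        gcongr
        · exact ρ.nonneg_normed z
        · exact rearr_abs_le hd hu hc hM0 hM _
    _ = M := by rw [integral_mul_const, ρ.integral_normed, one_mul]

lemma moll_nonneg {d : ℕ} (hd : 1 ≤ d) {u : EE d → ℝ} (hu : Continuous u)
    (hc : HasCompactSupport u) (ρ : ContDiffBump (0 : EE d)) (x : EE d) : 0 ≤ moll ρ u x := by
  rw [moll_apply]
  exact integral_nonneg fun z => mul_nonneg (ρ.nonneg_normed z) (rearr_nonneg hd hu hc _)

lemma moll_integral {d : ℕ} (hd : 1 ≤ d) {u : EE d → ℝ} (hu : Continuous u)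
    (hc : HasCompactSupport u) (h0 : ∀ x, 0 ≤ u x) (ρ : ContDiffBump (0 : EE d)) :
    ∫ x, moll ρ u x = ∫ x, u x := by
  have h1 : ∫ x, moll ρ u x = ∫ x, rearr u x := by
    unfold moll
    rw [integral_convolution _ ρ.integrable_normed (rearr_int hd hu hc), ρ.integral_normed]
    simp
  rw [h1, integral_eq_lintegral_of_nonneg_ae (Eventually.of_forall (rearr_nonneg hd hu hc))
    (rearr_meas hd hu hc).aestronglyMeasurable, integral_eq_lintegral_of_nonneg_ae
    (Eventually.of_forall h0) hu.aestronglyMeasurable]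
  congr 1
  simpa using lint_rearr hd hu hc h0 1 one_pos

lemma grad_sq_int {d : ℕ} {φ : EE d → ℝ} (h : ContDiff ℝ (⊤ : ℕ∞) φ) (hc : HasCompactSupport φ) :
    Integrable fun x => ‖fderiv ℝ φ x‖ ^ 2 := by
  have h1 : Continuous (fderiv ℝ φ) := h.continuous_fderiv (by simp)
  refine (h1.norm.pow 2).integrable_of_hasCompactSupport ?_
  refine HasCompactSupport.intro hc fun x hx => ?_
  have : fderiv ℝ φ x = 0 := by
    by_contra hne
    exact hx (support_fderiv_subset ℝ hne)
  change ‖fderiv ℝ φ x‖ ^ 2 = 0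
  rw [this, norm_zero]
  norm_num

/-- Polya–Szegő for the mollified rearrangement. -/
theorem polya_szego {d : ℕ} (hd : 1 ≤ d) {φ : EE d → ℝ} (h : ContDiff ℝ (⊤ : ℕ∞) φ)
    (hc : HasCompactSupport φ) (ρ : ContDiffBump (0 : EE d)) :
    ∫ x, ‖fderiv ℝ (moll ρ fun y => |φ y|) x‖ ^ 2 ≤ ∫ x, ‖fderiv ℝ φ x‖ ^ 2 := by
  set u := fun y => |φ y| with hu'
  have hu : Continuous u := h.continuous.abs
  have huc : HasCompactSupport u := hc.comp_left (g := fun a : ℝ => |a|) (by simp)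
  have hu0 : ∀ x, 0 ≤ u x := fun x => abs_nonneg _
  set g := moll ρ u with hg
  have hgd : ContDiff ℝ (⊤ : ℕ∞) g := moll_contDiff hd hu huc ρ
  have hgc : HasCompactSupport g := moll_cs hd hu huc ρ
  obtain ⟨K, hK0, hK⟩ := taylor_bound h hc
  obtain ⟨K', hK0', hK'⟩ := taylor_bound hgd hgc
  obtain ⟨M, hM0, hM⟩ := exists_bound hu huc
  have ineq : ∀ t : ℝ, 0 < t → 2 * K * t < 1 → 2 * K' * t < 1 →
      (1 - 2 * K' * t) * (1 - 2 * K * t) * ∫ x, ‖fderiv ℝ g x‖ ^ 2 ≤ ∫ x, ‖fderiv ℝ φ x‖ ^ 2 := by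
    intro t ht ht1 ht2
    have hq : 0 < 1 - 2 * K * t := by linarith
    have hq' : 0 < 1 - 2 * K' * t := by linarith
    have c1 : ∫⁻ x, ENNReal.ofReal (g x + t / 2 * (1 - 2 * K' * t) * ‖fderiv ℝ g x‖ ^ 2) ≤
        ∫⁻ x, ENNReal.ofReal (u x + t / (2 * (1 - 2 * K * t)) * ‖fderiv ℝ φ x‖ ^ 2) := by
      calc _ ≤ ∫⁻ x, supc t g x := lintegral_mono fun x => supc_lower ht hK' x
        _ ≤ ∫⁻ x, supc t (rearr u) x := supc_conv (rearr_meas hd hu huc)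
            (rearr_abs_le hd hu huc hM0 hM) ρ.nonneg_normed ρ.integrable_normed ρ.integral_normed
            (moll_apply ρ u) t
        _ ≤ ∫⁻ x, supc t u x := supc_rearr hd hu huc ht
        _ ≤ _ := lintegral_mono fun x => supc_abs_upper ht ht1 hK x
    have ig : Integrable g := hgd.continuous.integrable_of_hasCompactSupport hgc
    have iu : Integrable u := hu.integrable_of_hasCompactSupport huc
    have ig2 := grad_sq_int hgd hgc
    have iu2 := grad_sq_int h hc
    rw [← ofReal_integral_eq_lintegral_ofReal, ← ofReal_integral_eq_lintegral_ofReal,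
      ENNReal.ofReal_le_ofReal_iff, integral_add ig (ig2.const_mul _),
      integral_add iu (iu2.const_mul _), integral_const_mul, integral_const_mul,
      moll_integral hd hu huc hu0] at c1
    · have c2 := le_of_add_le_add_left c1
      have c3 : t / (2 * (1 - 2 * K * t)) * (∫ x, ‖fderiv ℝ φ x‖ ^ 2) * (2 * (1 - 2 * K * t) / t) =
        ∫ x, ‖fderiv ℝ φ x‖ ^ 2 := by
        generalize 1 - 2 * K * t = q at hq
        field_simp
      have c4 : t / 2 * (1 - 2 * K' * t) * (∫ x, ‖fderiv ℝ g x‖ ^ 2) * (2 * (1 - 2 * K * t) / t) =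
        (1 - 2 * K' * t) * (1 - 2 * K * t) * ∫ x, ‖fderiv ℝ g x‖ ^ 2 := by
        field_simp
      rw [← c3, ← c4]
      exact mul_le_mul_of_nonneg_right c2 (by positivity)
    · exact integral_nonneg fun x => add_nonneg (hu0 x) (by positivity)
    · exact iu.add (iu2.const_mul _)
    · exact Eventually.of_forall fun x => add_nonneg (hu0 x) (by positivity)
    · exact ig.add (ig2.const_mul _)
    · exact Eventually.of_forall fun x => add_nonneg (moll_nonneg hd hu huc ρ x) (by positivity)
  have lim : Tendsto (fun t : ℝ => (1 - 2 * K' * t) * (1 - 2 * K * t) * ∫ x, ‖fderiv ℝ g x‖ ^ 2)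
      (𝓝[>] 0) (𝓝 (∫ x, ‖fderiv ℝ g x‖ ^ 2)) := by
    have : Continuous (fun t : ℝ => (1 - 2 * K' * t) * (1 - 2 * K * t) *
      ∫ x, ‖fderiv ℝ g x‖ ^ 2) := by fun_prop
    have := (this.tendsto 0).mono_left (nhdsWithin_le_nhds (s := Ioi 0))
    simpa using this
  refine le_of_tendsto lim ?_
  have e1 : ∀ K : ℝ, ∀ᶠ t in 𝓝[>] (0:ℝ), 2 * K * t < 1 := by
    intro K
    have : Continuous (fun t : ℝ => 2 * K * t) := by fun_prop
    have := (this.tendsto 0).mono_left (nhdsWithin_le_nhds (s := Ioi 0))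
    exact this.eventually (gt_mem_nhds (by simp))
  filter_upwards [e1 K, e1 K', self_mem_nhdsWithin] with t h1 h2 h3
  exact ineq t h3 h1 h2

end Part6

section Part7
open MeasureTheory Set Filter Topology
open scoped Pointwise Convolution

/-- admissible test functions -/
def adm {d : ℕ} (Ω : Set (EE d)) (φ : EE d → ℝ) : Prop :=
  ContDiff ℝ (⊤ : ℕ∞) φ ∧ HasCompactSupport φ ∧ tsupport φ ⊆ Ω

noncomputable def gA {d : ℕ} (φ : EE d → ℝ) : ℝ := ∫ x, ‖fderiv ℝ φ x‖ ^ 2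
noncomputable def gB {d : ℕ} (s : ℝ) (φ : EE d → ℝ) : ℝ := ∫ x, ‖x‖ ^ (2 * s) * φ x ^ 2
noncomputable def gN {d : ℕ} (φ : EE d → ℝ) : ℝ := ∫ x, φ x ^ 2

lemma gA_nonneg {d : ℕ} (φ : EE d → ℝ) : 0 ≤ gA φ := integral_nonneg fun _ => by positivity
lemma gB_nonneg {d : ℕ} (s : ℝ) (φ : EE d → ℝ) : 0 ≤ gB s φ :=
  integral_nonneg fun _ => by positivity
lemma gN_nonneg {d : ℕ} (φ : EE d → ℝ) : 0 ≤ gN φ := integral_nonneg fun _ => by positivity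

lemma w_cont {d : ℕ} {s : ℝ} (hs : 0 < s) : Continuous fun x : EE d => ‖x‖ ^ (2 * s) :=
  continuous_norm.rpow_const fun _ => Or.inr (by positivity)

/-- the shrinking bumps -/
noncomputable def bmp (d n : ℕ) : ContDiffBump (0 : EE d) where
  rIn := 1 / ((n : ℝ) + 1)
  rOut := 2 / ((n : ℝ) + 1)
  rIn_pos := by positivity
  rIn_lt_rOut := by gcongr; norm_num

lemma bmp_rOut (d : ℕ) : Tendsto (fun n => (bmp d n).rOut) atTop (𝓝 0) := by
  have := (tendsto_one_div_add_atTop_nhds_zero_nat (𝕜 := ℝ)).const_mul 2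
  simpa [bmp, div_eq_mul_inv] using this

lemma bmp_le (d n : ℕ) : (bmp d n).rOut ≤ 2 := by
  have : (0:ℝ) ≤ n := by positivity
  change 2 / ((n:ℝ) + 1) ≤ 2
  rw [div_le_iff₀ (by positivity)]
  linarith

lemma moll_lim {d : ℕ} (hd : 1 ≤ d) {u : EE d → ℝ} (hu : Continuous u)
    (hc : HasCompactSupport u) {w : EE d → ℝ} (hw : Continuous w) :
    Tendsto (fun n => ∫ x, w x * moll (bmp d n) u x ^ 2) atTop (𝓝 (∫ x, w x * rearr u x ^ 2)) := by
  obtain ⟨M, hM0, hM⟩ := exists_bound hu hc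
  set R := radv d (volume (lev u 0)) with hR
  refine tendsto_integral_of_dominated_convergence
    ((Metric.closedBall (0 : EE d) (R + 2)).indicator fun x => |w x| * M ^ 2) ?_ ?_ ?_ ?_
  · intro n
    exact (hw.mul ((moll_contDiff hd hu hc _).continuous.pow 2)).aestronglyMeasurable
  · rw [integrable_indicator_iff Metric.isClosed_closedBall.measurableSet]
    exact (by fun_prop : Continuous fun x => |w x| * M ^ 2).continuousOn.integrableOn_compact
      (isCompact_closedBall _ _)
  · intro n
    refine Eventually.of_forall fun x => ?_
    by_cases hx : x ∈ Metric.closedBall (0 : EE d) (R + 2)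
    · rw [indicator_of_mem hx, norm_mul, Real.norm_eq_abs, norm_pow, Real.norm_eq_abs]
      gcongr
      exact moll_abs_le hd hu hc hM0 hM _ x
    · rw [indicator_of_notMem hx, moll_zero hd hu hc]
      · simp
      · simp only [mem_closedBall_zero_iff, not_le] at hx
        have := bmp_le d n
        linarith
  · have := ContDiffBump.ae_convolution_tendsto_right_of_locallyIntegrable (μ := volume) (K := 2)
      (φ := fun n => bmp d n) (l := atTop) (bmp_rOut d)
      (Eventually.of_forall fun n => by
        change 2 / ((n:ℝ) + 1) ≤ 2 * (1 / ((n:ℝ) + 1))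
        apply le_of_eq; ring) (rearr_int hd hu hc).locallyIntegrable
    filter_upwards [this] with x hx
    exact (hx.pow 2).const_mul _

lemma rearr_N {d : ℕ} (hd : 1 ≤ d) {u : EE d → ℝ} (hu : Continuous u)
    (hc : HasCompactSupport u) (h0 : ∀ x, 0 ≤ u x) : ∫ x, rearr u x ^ 2 = ∫ x, u x ^ 2 := by
  have m1 : Measurable fun x => rearr u x ^ 2 := (rearr_meas hd hu hc).pow_const 2
  have m2 : Continuous fun x => u x ^ 2 := hu.pow 2
  rw [integral_eq_lintegral_of_nonneg_ae (Eventually.of_forall fun x => by positivity)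
    m1.aestronglyMeasurable,
    integral_eq_lintegral_of_nonneg_ae (Eventually.of_forall fun x => by positivity)
    m2.aestronglyMeasurable]
  have := lint_rearr hd hu hc h0 2 two_pos
  simp only [Real.rpow_two] at this
  rw [this]

lemma rearr_B {d : ℕ} (hd : 1 ≤ d) {u : EE d → ℝ} (hu : Continuous u)
    (hc : HasCompactSupport u) (h0 : ∀ x, 0 ≤ u x) {s : ℝ} (hs : 0 < s) :
    ∫ x, ‖x‖ ^ (2 * s) * rearr u x ^ 2 ≤ ∫ x, ‖x‖ ^ (2 * s) * u x ^ 2 := by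
  have hintg : Integrable fun x => ‖x‖ ^ (2 * s) * u x ^ 2 := by
    refine ((w_cont hs).mul (hu.pow 2)).integrable_of_hasCompactSupport ?_
    refine HasCompactSupport.intro hc fun x hx => ?_
    simp [image_eq_zero_of_notMem_tsupport hx]
  have mono : Monotone fun r : ℝ => ENNReal.ofReal ((max r 0) ^ (2 * s)) := by
    intro a b hab
    apply ENNReal.ofReal_le_ofReal
    apply Real.rpow_le_rpow (le_max_right _ _) (max_le_max_right 0 hab) (by positivity)
  have key := lint_rearr_weight hd hu hc h0 mono 2 two_pos
  simp only [Real.rpow_two, norm_nonneg, sup_of_le_left] at key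
  have e : ∀ (x : EE d) (a : ℝ), ENNReal.ofReal (‖x‖ ^ (2 * s)) * ENNReal.ofReal (a ^ 2) =
      ENNReal.ofReal (‖x‖ ^ (2 * s) * a ^ 2) := fun x a => by
    rw [ENNReal.ofReal_mul (by positivity)]
  simp only [e] at key
  have m1 : Measurable fun x : EE d => ‖x‖ ^ (2 * s) * rearr u x ^ 2 :=
    (w_cont hs).measurable.mul ((rearr_meas hd hu hc).pow_const 2)
  rw [integral_eq_lintegral_of_nonneg_ae (Eventually.of_forall fun x => by positivity)
    m1.aestronglyMeasurable,
    integral_eq_lintegral_of_nonneg_ae (Eventually.of_forall fun x => by positivity)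
    hintg.aestronglyMeasurable]
  refine ENNReal.toReal_mono ?_ key
  exact hintg.lintegral_lt_top.ne

lemma supp_lt {d : ℕ} (hd : 1 ≤ d) {Ω K : Set (EE d)} (hΩ : IsOpen Ω)
    (hne : Ω.Nonempty) (hK : IsCompact K) (hKΩ : K ⊆ Ω) :
    volume K < volume Ω := by
  have : Nonempty (Fin d) := ⟨⟨0, hd⟩⟩
  have hne' : (Ω \ K).Nonempty := by
    rw [nonempty_iff_ne_empty]
    intro h
    have e : K = Ω := hKΩ.antisymm (sdiff_eq_empty.1 h)
    have : IsClopen K := ⟨hK.isClosed, e ▸ hΩ⟩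
    have hu := this.eq_univ (e ▸ hne)
    rw [hu] at hK
    exact noncompact_univ (EE d) hK
  have pos : 0 < volume (Ω \ K) := (hΩ.sdiff hK.isClosed).measure_pos _ hne'
  have : volume Ω = volume K + volume (Ω \ K) := by
    rw [measure_add_sdiff hK.measurableSet.nullMeasurableSet, union_eq_self_of_subset_left hKΩ]
  rw [this]
  exact ENNReal.lt_add_right hK.measure_lt_top.ne pos.ne'

/-- Faber–Krahn type inequality -/
theorem fk {d : ℕ} (hd : 1 ≤ d) {s : ℝ} (hs : 0 < s) {Ω : Set (EE d)} (hΩ : IsOpen Ω)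
    (hne : Ω.Nonempty) {r : ℝ} (hr : 0 < r) (hv : volume Ω = volume (Metric.ball (0 : EE d) r))
    {c μ : ℝ} (hμ : 0 ≤ μ)
    (H : ∀ ψ, adm (Metric.ball (0 : EE d) r) ψ → c * gN ψ ≤ gA ψ + μ * gB s ψ)
    {φ : EE d → ℝ} (hφ : adm Ω φ) : c * gN φ ≤ gA φ + μ * gB s φ := by
  obtain ⟨h, hc, hsup⟩ := hφ
  set u := fun y => |φ y| with hu'
  have hu : Continuous u := h.continuous.abs
  have huc : HasCompactSupport u := hc.comp_left (g := fun a : ℝ => |a|) (by simp)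
  have hu0 : ∀ x, 0 ≤ u x := fun x => abs_nonneg _
  have hRr : radv d (volume (lev u 0)) < r := by
    rw [← vol_ball_lt hd (radv_nonneg _ _) hr.le, vol_radv hd (lev_ne_top huc le_rfl), ← hv]
    refine lt_of_le_of_lt (measure_mono ?_) (supp_lt hd hΩ hne hc hsup)
    intro x hx
    by_contra hx'
    have : φ x = 0 := image_eq_zero_of_notMem_tsupport hx'
    have hx : 0 < u x := hx
    simp [hu', this] at hx
  have l1 := moll_lim hd hu huc (continuous_const (y := (1:ℝ)))
  have l2 := moll_lim hd hu huc (w_cont (d := d) hs)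
  simp only [one_mul] at l1
  have L1 := l1.const_mul c
  have L2 := (l2.const_mul μ).const_add (gA φ)
  have key : c * ∫ x, rearr u x ^ 2 ≤ gA φ + μ * ∫ x, ‖x‖ ^ (2 * s) * rearr u x ^ 2 := by
    refine le_of_tendsto_of_tendsto L1 L2 ?_
    have ev : ∀ᶠ n in atTop, (bmp d n).rOut < r - radv d (volume (lev u 0)) :=
      (bmp_rOut d).eventually (gt_mem_nhds (by linarith))
    filter_upwards [ev] with n hn
    have h1 : adm (Metric.ball (0 : EE d) r) (moll (bmp d n) u) := by
      refine ⟨moll_contDiff hd hu huc _, moll_cs hd hu huc _,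
        (moll_tsupport hd hu huc _).trans (Metric.closedBall_subset_ball (by linarith))⟩
    have h2 : gA (moll (bmp d n) u) ≤ gA φ := polya_szego hd h hc (bmp d n)
    have h3 := H _ h1
    unfold gN gB at h3
    linarith
  rw [rearr_N hd hu huc hu0] at key
  have h4 := mul_le_mul_of_nonneg_left (rearr_B hd hu huc hu0 hs) hμ
  simp only [hu', sq_abs] at key h4
  unfold gN gB
  linarith

end Part7

section Part8
open MeasureTheory Set Filter Topology

/-- admissible test functions on products -/
def admP {d₁ d₂ : ℕ} (Ω : Set (EE d₁ × EE d₂)) (u : EE d₁ × EE d₂ → ℝ) : Prop :=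
  ContDiff ℝ (⊤ : ℕ∞) u ∧ HasCompactSupport u ∧ tsupport u ⊆ Ω

noncomputable def D1 {d₁ d₂ : ℕ} (u : EE d₁ × EE d₂ → ℝ) (x : EE d₁ × EE d₂) : ℝ :=
  ‖fderiv ℝ (fun y => u (y, x.2)) x.1‖ ^ 2
noncomputable def D2 {d₁ d₂ : ℕ} (u : EE d₁ × EE d₂ → ℝ) (x : EE d₁ × EE d₂) : ℝ :=
  ‖fderiv ℝ (fun y => u (x.1, y)) x.2‖ ^ 2
noncomputable def pE {d₁ d₂ : ℕ} (s : ℝ) (u : EE d₁ × EE d₂ → ℝ) : ℝ :=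
  ∫ x, (D1 u x + ‖x.1‖ ^ (2 * s) * D2 u x)
noncomputable def pN {d₁ d₂ : ℕ} (u : EE d₁ × EE d₂ → ℝ) : ℝ := ∫ x, u x ^ 2

lemma part1 {d₁ d₂ : ℕ} {u : EE d₁ × EE d₂ → ℝ} (h : ContDiff ℝ (⊤ : ℕ∞) u)
    (x : EE d₁ × EE d₂) : fderiv ℝ (fun y => u (y, x.2)) x.1 =
      (fderiv ℝ u x).comp (ContinuousLinearMap.inl ℝ (EE d₁) (EE d₂)) := by
  have h1 : HasFDerivAt u (fderiv ℝ u x) (x.1, x.2) :=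
    (h.differentiable (by simp) x).hasFDerivAt
  exact (HasFDerivAt.comp x.1 h1 (hasFDerivAt_prodMk_left x.1 x.2)).fderiv

lemma part2 {d₁ d₂ : ℕ} {u : EE d₁ × EE d₂ → ℝ} (h : ContDiff ℝ (⊤ : ℕ∞) u)
    (x : EE d₁ × EE d₂) : fderiv ℝ (fun y => u (x.1, y)) x.2 =
      (fderiv ℝ u x).comp (ContinuousLinearMap.inr ℝ (EE d₁) (EE d₂)) := by
  have h1 : HasFDerivAt u (fderiv ℝ u x) (x.1, x.2) :=
    (h.differentiable (by simp) x).hasFDerivAt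
  exact (HasFDerivAt.comp x.2 h1 (hasFDerivAt_prodMk_right x.1 x.2)).fderiv

lemma D1_cont {d₁ d₂ : ℕ} {u : EE d₁ × EE d₂ → ℝ} (h : ContDiff ℝ (⊤ : ℕ∞) u) :
    Continuous (D1 u) := by
  unfold D1
  simp only [part1 h]
  have h1 : Continuous (fderiv ℝ u) := h.continuous_fderiv (by simp)
  exact (h1.clm_comp continuous_const).norm.pow 2

lemma D2_cont {d₁ d₂ : ℕ} {u : EE d₁ × EE d₂ → ℝ} (h : ContDiff ℝ (⊤ : ℕ∞) u) :
    Continuous (D2 u) := by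
  unfold D2
  simp only [part2 h]
  have h1 : Continuous (fderiv ℝ u) := h.continuous_fderiv (by simp)
  exact (h1.clm_comp continuous_const).norm.pow 2

lemma fderiv_zero_of {d₁ d₂ : ℕ} {u : EE d₁ × EE d₂ → ℝ} {x : EE d₁ × EE d₂}
    (hx : x ∉ tsupport u) : fderiv ℝ u x = 0 := by
  by_contra hne
  exact hx (support_fderiv_subset ℝ hne)

lemma D1_zero {d₁ d₂ : ℕ} {u : EE d₁ × EE d₂ → ℝ} (h : ContDiff ℝ (⊤ : ℕ∞) u)
    {x : EE d₁ × EE d₂} (hx : x ∉ tsupport u) : D1 u x = 0 := by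
  rw [D1, part1 h, fderiv_zero_of hx]; simp

lemma D2_zero {d₁ d₂ : ℕ} {u : EE d₁ × EE d₂ → ℝ} (h : ContDiff ℝ (⊤ : ℕ∞) u)
    {x : EE d₁ × EE d₂} (hx : x ∉ tsupport u) : D2 u x = 0 := by
  rw [D2, part2 h, fderiv_zero_of hx]; simp

lemma int_of {d₁ d₂ : ℕ} {u f : EE d₁ × EE d₂ → ℝ} (hc : HasCompactSupport u)
    (hf : Continuous f) (hz : ∀ x, x ∉ tsupport u → f x = 0) :
    Integrable f ((volume : Measure (EE d₁)).prod (volume : Measure (EE d₂))) :=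
  hf.integrable_of_hasCompactSupport (HasCompactSupport.intro hc hz)

lemma slice2 {d₁ d₂ : ℕ} {Ω₁ : Set (EE d₁)} {Ω₂ : Set (EE d₂)} {u : EE d₁ × EE d₂ → ℝ}
    (hu : admP (Ω₁ ×ˢ Ω₂) u) (a : EE d₁) : adm Ω₂ (fun y => u (a, y)) := by
  obtain ⟨h, hc, hs⟩ := hu
  have hsub : tsupport (fun y => u (a, y)) ⊆ (Prod.mk a) ⁻¹' tsupport u := by
    refine closure_minimal ?_ ((isClosed_tsupport u).preimage (by fun_prop))
    intro y hy
    exact subset_tsupport u hy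
  refine ⟨h.comp (by fun_prop), ?_, fun y hy => (hs (hsub hy)).2⟩
  refine HasCompactSupport.intro (hc.isCompact.image continuous_snd) fun y hy => ?_
  by_contra hne
  exact hy ⟨(a, y), subset_tsupport u hne, rfl⟩

lemma slice1 {d₁ d₂ : ℕ} {Ω₁ : Set (EE d₁)} {Ω₂ : Set (EE d₂)} {u : EE d₁ × EE d₂ → ℝ}
    (hu : admP (Ω₁ ×ˢ Ω₂) u) (b : EE d₂) : adm Ω₁ (fun y => u (y, b)) := by
  obtain ⟨h, hc, hs⟩ := hu
  have hsub : tsupport (fun y => u (y, b)) ⊆ (fun y => (y, b)) ⁻¹' tsupport u := by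
    refine closure_minimal ?_ ((isClosed_tsupport u).preimage (by fun_prop))
    intro y hy
    exact subset_tsupport u hy
  refine ⟨h.comp (by fun_prop), ?_, fun y hy => (hs (hsub hy)).1⟩
  refine HasCompactSupport.intro (hc.isCompact.image continuous_fst) fun y hy => ?_
  by_contra hne
  exact hy ⟨(y, b), subset_tsupport u hne, rfl⟩

lemma w1_cont {d₁ d₂ : ℕ} {s : ℝ} (hs : 0 < s) :
    Continuous fun x : EE d₁ × EE d₂ => ‖x.1‖ ^ (2 * s) := (w_cont hs).comp continuous_fst

theorem lower {d₁ d₂ : ℕ} {s : ℝ} (hs : 0 < s) {Ω₁ : Set (EE d₁)} {Ω₂ : Set (EE d₂)} {c M : ℝ}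
    (H2 : ∀ ψ, adm Ω₂ ψ → M * gN ψ ≤ gA ψ)
    (H1 : ∀ φ, adm Ω₁ φ → c * gN φ ≤ gA φ + M * gB s φ)
    {u : EE d₁ × EE d₂ → ℝ} (hu : admP (Ω₁ ×ˢ Ω₂) u) : c * pN u ≤ pE s u := by
  obtain ⟨h, hc, hsup⟩ := id hu
  have uz : ∀ x, x ∉ tsupport u → u x = 0 := fun x hx => image_eq_zero_of_notMem_tsupport hx
  have iN := int_of (f := fun x => u x ^ 2) hc (h.continuous.pow 2) (fun x hx => by simp [uz x hx])
  have i1 := int_of (f := D1 u) hc (D1_cont h) (fun x hx => D1_zero h hx)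
  have i2 := int_of (f := fun x => ‖x.1‖ ^ (2 * s) * D2 u x) hc ((w1_cont hs).mul (D2_cont h))
    (fun x hx => by simp [D2_zero h hx])
  have iB := int_of (f := fun x => ‖x.1‖ ^ (2 * s) * u x ^ 2) hc
    ((w1_cont hs).mul (h.continuous.pow 2)) (fun x hx => by simp [uz x hx])
  have e : pE s u = (∫ x, D1 u x) + ∫ x, ‖x.1‖ ^ (2 * s) * D2 u x := integral_add i1 i2
  have s2 : M * ∫ x : EE d₁ × EE d₂, ‖x.1‖ ^ (2 * s) * u x ^ 2 ≤ ∫ x, ‖x.1‖ ^ (2 * s) * D2 u x := by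
    rw [Measure.volume_eq_prod, integral_prod _ iB, integral_prod _ i2, ← integral_const_mul]
    refine integral_mono (iB.integral_prod_left.const_mul M) i2.integral_prod_left fun a => ?_
    have := H2 _ (slice2 hu a)
    simp only [integral_const_mul]
    have := mul_le_mul_of_nonneg_left this (by positivity : 0 ≤ ‖a‖ ^ (2 * s))
    unfold gN gA at this
    unfold D2
    linarith
  have s1 : c * pN u ≤ (∫ x, D1 u x) + M * ∫ x : EE d₁ × EE d₂, ‖x.1‖ ^ (2 * s) * u x ^ 2 := by
    unfold pN
    rw [Measure.volume_eq_prod, integral_prod_symm _ iB, integral_prod_symm _ i1,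
      integral_prod_symm _ iN, ← integral_const_mul, ← integral_const_mul,
      ← integral_add i1.integral_prod_right (iB.integral_prod_right.const_mul M)]
    refine integral_mono (iN.integral_prod_right.const_mul c)
      (i1.integral_prod_right.add (iB.integral_prod_right.const_mul M)) fun b => ?_
    exact H1 _ (slice1 hu b)
  rw [e]; linarith

theorem upper {d₁ d₂ : ℕ} {s : ℝ} (hs : 0 < s) {Ω₁ : Set (EE d₁)} {Ω₂ : Set (EE d₂)} {c : ℝ}
    (H : ∀ u, admP (Ω₁ ×ˢ Ω₂) u → c * pN u ≤ pE s u)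
    {φ : EE d₁ → ℝ} (hφ : adm Ω₁ φ) {ψ : EE d₂ → ℝ} (hψ : adm Ω₂ ψ) :
    c * (gN φ * gN ψ) ≤ gA φ * gN ψ + gB s φ * gA ψ := by
  set u : EE d₁ × EE d₂ → ℝ := fun x => φ x.1 * ψ x.2 with hudef
  have hsub : tsupport u ⊆ tsupport φ ×ˢ tsupport ψ := by
    refine closure_minimal ?_ ((isClosed_tsupport φ).prod (isClosed_tsupport ψ))
    intro x hx
    exact ⟨subset_tsupport φ (left_ne_zero_of_mul hx), subset_tsupport ψ (right_ne_zero_of_mul hx)⟩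
  have h : ContDiff ℝ (⊤ : ℕ∞) u :=
    (hφ.1.comp contDiff_fst).mul (hψ.1.comp contDiff_snd)
  have hc : HasCompactSupport u :=
    HasCompactSupport.of_support_subset_isCompact (hφ.2.1.isCompact.prod hψ.2.1.isCompact)
      ((subset_tsupport u).trans hsub)
  have hu : admP (Ω₁ ×ˢ Ω₂) u := ⟨h, hc, hsub.trans (prod_mono hφ.2.2 hψ.2.2)⟩
  have key := H u hu
  have i1 := int_of (f := D1 u) hc (D1_cont h) (fun x hx => D1_zero h hx)
  have i2 := int_of (f := fun x => ‖x.1‖ ^ (2 * s) * D2 u x) hc ((w1_cont hs).mul (D2_cont h))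
    (fun x hx => by simp [D2_zero h hx])
  have e : pE s u = (∫ x, D1 u x) + ∫ x, ‖x.1‖ ^ (2 * s) * D2 u x := integral_add i1 i2
  have d1 : ∀ x, D1 u x = ‖fderiv ℝ φ x.1‖ ^ 2 * ψ x.2 ^ 2 := by
    intro x
    have : fderiv ℝ (fun y => u (y, x.2)) x.1 = ψ x.2 • fderiv ℝ φ x.1 := by
      simp only [hudef]
      exact fderiv_mul_const (hφ.1.differentiable (by simp) x.1) (ψ x.2)
    rw [D1, this, norm_smul, mul_pow, Real.norm_eq_abs, sq_abs, mul_comm]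
  have d2 : ∀ x, ‖x.1‖ ^ (2 * s) * D2 u x =
      (‖x.1‖ ^ (2 * s) * φ x.1 ^ 2) * ‖fderiv ℝ ψ x.2‖ ^ 2 := by
    intro x
    have : fderiv ℝ (fun y => u (x.1, y)) x.2 = φ x.1 • fderiv ℝ ψ x.2 := by
      simp only [hudef]
      exact fderiv_const_mul (hψ.1.differentiable (by simp) x.2) (φ x.1)
    rw [D2, this, norm_smul, mul_pow, Real.norm_eq_abs, sq_abs, mul_assoc]
  have n : ∀ x, u x ^ 2 = φ x.1 ^ 2 * ψ x.2 ^ 2 := fun x => mul_pow _ _ _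
  have eN : pN u = gN φ * gN ψ := by
    unfold pN gN
    simp only [n]
    exact integral_prod_mul (fun x => φ x ^ 2) (fun y => ψ y ^ 2)
  have eA : ∫ x, D1 u x = gA φ * gN ψ := by
    unfold gA gN
    simp only [d1]
    exact integral_prod_mul (fun x => ‖fderiv ℝ φ x‖ ^ 2) (fun y => ψ y ^ 2)
  have eB : ∫ x, ‖x.1‖ ^ (2 * s) * D2 u x = gB s φ * gA ψ := by
    unfold gA gB
    simp only [d2]
    exact integral_prod_mul (fun x => ‖x‖ ^ (2 * s) * φ x ^ 2) (fun y => ‖fderiv ℝ ψ y‖ ^ 2)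
  rwa [e, eN, eA, eB] at key

lemma adm_exists {d : ℕ} {Ω : Set (EE d)} (hΩ : IsOpen Ω) (hne : Ω.Nonempty) :
    ∃ φ, adm Ω φ ∧ φ ≠ 0 := by
  obtain ⟨x, hx⟩ := hne
  obtain ⟨f, h1, h2, h3, _, h4⟩ := exists_contDiff_tsupport_subset (n := ⊤) (hΩ.mem_nhds hx)
  refine ⟨f, ⟨h3, h2, h1⟩, ?_⟩
  rintro rfl
  simp at h4

lemma gN_pos {d : ℕ} {Ω : Set (EE d)} {φ : EE d → ℝ} (h : adm Ω φ) (hne : φ ≠ 0) : 0 < gN φ := by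
  have hc : Continuous fun x => φ x ^ 2 := h.1.continuous.pow 2
  obtain ⟨x, hx⟩ := Function.ne_iff.1 hne
  refine hc.integral_pos_of_hasCompactSupport_nonneg_nonzero ?_ (fun x => by positivity) (x := x) ?_
  · refine HasCompactSupport.intro h.2.1 fun y hy => ?_
    simp [image_eq_zero_of_notMem_tsupport hy]
  · simpa using hx

lemma pN_pos {d₁ d₂ : ℕ} {Ω : Set (EE d₁ × EE d₂)} {φ : EE d₁ × EE d₂ → ℝ} (h : admP Ω φ)
    (hne : φ ≠ 0) : 0 < pN φ := by
  have hc : Continuous fun x => φ x ^ 2 := h.1.continuous.pow 2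
  obtain ⟨x, hx⟩ := Function.ne_iff.1 hne
  refine hc.integral_pos_of_hasCompactSupport_nonneg_nonzero ?_ (fun x => by positivity) (x := x) ?_
  · refine HasCompactSupport.intro h.2.1 fun y hy => ?_
    simp [image_eq_zero_of_notMem_tsupport hy]
  · simpa using hx

/-- comparison of product domains with products of balls -/
theorem compare {d₁ d₂ : ℕ} (hd₁ : 1 ≤ d₁) (hd₂ : 1 ≤ d₂) {s : ℝ} (hs : 0 < s)
    {Ω₁ : Set (EE d₁)} {Ω₂ : Set (EE d₂)} (ho₁ : IsOpen Ω₁) (ho₂ : IsOpen Ω₂)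
    (hn₁ : Ω₁.Nonempty) (hn₂ : Ω₂.Nonempty) {r₁ r₂ : ℝ} (hr₁ : 0 < r₁) (hr₂ : 0 < r₂)
    (hv₁ : volume Ω₁ = volume (Metric.ball (0 : EE d₁) r₁))
    (hv₂ : volume Ω₂ = volume (Metric.ball (0 : EE d₂) r₂)) {c : ℝ}
    (H : ∀ u, admP (Metric.ball (0 : EE d₁) r₁ ×ˢ Metric.ball (0 : EE d₂) r₂) u →
      c * pN u ≤ pE s u)
    {u : EE d₁ × EE d₂ → ℝ} (hu : admP (Ω₁ ×ˢ Ω₂) u) : c * pN u ≤ pE s u := by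
  set S := {q : ℝ | ∃ ψ, adm (Metric.ball (0 : EE d₂) r₂) ψ ∧ ψ ≠ 0 ∧ q = gA ψ / gN ψ} with hS
  have Sne : S.Nonempty := by
    obtain ⟨ψ, h1, h2⟩ := adm_exists (Metric.isOpen_ball (x := (0 : EE d₂)) (ε := r₂))
      ⟨0, Metric.mem_ball_self hr₂⟩
    exact ⟨_, ψ, h1, h2, rfl⟩
  have S0 : ∀ q ∈ S, 0 ≤ q := by
    rintro q ⟨ψ, -, -, rfl⟩
    exact div_nonneg (gA_nonneg _) (gN_nonneg _)
  have Sb : BddBelow S := ⟨0, S0⟩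
  set M := sInf S with hM
  have hM0 : 0 ≤ M := Real.sInf_nonneg S0
  have B2 : ∀ ψ, adm (Metric.ball (0 : EE d₂) r₂) ψ → M * gN ψ ≤ gA ψ := by
    intro ψ hψ
    by_cases hne : ψ = 0
    · subst hne
      have : gN (0 : EE d₂ → ℝ) = 0 := by simp [gN]
      rw [this, mul_zero]; exact gA_nonneg _
    · have : M ≤ gA ψ / gN ψ := csInf_le Sb ⟨ψ, hψ, hne, rfl⟩
      exact (le_div_iff₀ (gN_pos hψ hne)).1 this
  have B1 : ∀ φ, adm (Metric.ball (0 : EE d₁) r₁) φ → c * gN φ ≤ gA φ + M * gB s φ := by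
    intro φ hφ
    by_contra! hlt
    have hB := gB_nonneg s φ
    have step : ∀ q ∈ S, c * gN φ ≤ gA φ + q * gB s φ := by
      rintro q ⟨ψ, hψ, hne, rfl⟩
      have h1 := upper hs H hφ hψ
      have h2 := gN_pos hψ hne
      have : (c * gN φ) * gN ψ ≤ (gA φ + gA ψ / gN ψ * gB s φ) * gN ψ := by
        have e : (gA φ + gA ψ / gN ψ * gB s φ) * gN ψ = gA φ * gN ψ + gB s φ * gA ψ := by
          field_simp
        rw [e]; linarith
      exact le_of_mul_le_mul_right this h2
    rcases hB.eq_or_lt with h0 | hpos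
    · obtain ⟨q, hq⟩ := Sne
      have := step q hq
      rw [← h0] at this hlt
      linarith
    · have : (c * gN φ - gA φ) / gB s φ ≤ M := by
        refine le_csInf Sne fun q hq => ?_
        rw [div_le_iff₀ hpos]
        linarith [step q hq]
      rw [div_le_iff₀ hpos] at this
      linarith
  refine lower hs (M := M) ?_ ?_ hu
  · intro ψ hψ
    have := fk hd₂ hs ho₂ hn₂ hr₂ hv₂ (c := M) (μ := 0) le_rfl (by simpa using B2) hψ
    simpa using this
  · intro φ hφ
    exact fk hd₁ hs ho₁ hn₁ hr₁ hv₁ hM0 B1 hφ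

end Part8

section Part9
open MeasureTheory Set Filter Topology

lemma norm_grad {d : ℕ} (f : EE d → ℝ) (x : EE d) : ‖gradient f x‖ = ‖fderiv ℝ f x‖ := by
  unfold gradient
  exact LinearIsometryEquiv.norm_map _ _

lemma quot_eq {d₁ d₂ : ℕ} {s : ℝ} {Ω : Set (EE d₁ × EE d₂)} {u : EE d₁ × EE d₂ → ℝ}
    (hu : admP Ω u) :
    (∫ x in Ω, (‖gradient (fun y => u (y, x.2)) x.1‖ ^ 2
          + ‖x.1‖ ^ (2 * s) * ‖gradient (fun y => u (x.1, y)) x.2‖ ^ 2)) /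
        (∫ x in Ω, (u x) ^ 2) = pE s u / pN u := by
  simp only [norm_grad]
  rw [setIntegral_eq_integral_of_forall_compl_eq_zero,
    setIntegral_eq_integral_of_forall_compl_eq_zero]
  · rfl
  · intro x hx
    simp [image_eq_zero_of_notMem_tsupport fun h => hx (hu.2.2 h)]
  · intro x hx
    have h1 := D1_zero hu.1 fun h => hx (hu.2.2 h)
    have h2 := D2_zero hu.1 fun h => hx (hu.2.2 h)
    unfold D1 at h1
    unfold D2 at h2
    rw [h1, h2]; simp

lemma pE_nonneg {d₁ d₂ : ℕ} (s : ℝ) (u : EE d₁ × EE d₂ → ℝ) : 0 ≤ pE s u :=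
  integral_nonneg fun x => by unfold D1 D2; positivity

lemma lam_nonneg {d₁ d₂ : ℕ} (s : ℝ) (Ω : Set (EE d₁ × EE d₂)) :
    0 ≤ grushinLambda1 d₁ d₂ s Ω := by
  refine Real.sInf_nonneg ?_
  rintro q ⟨u, h1, h2, h3, -, rfl⟩
  rw [quot_eq ⟨h1, h2, h3⟩]
  exact div_nonneg (pE_nonneg _ _) (integral_nonneg fun x => by positivity)

lemma lam_le {d₁ d₂ : ℕ} {s : ℝ} {Ω : Set (EE d₁ × EE d₂)} {u : EE d₁ × EE d₂ → ℝ}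
    (hu : admP Ω u) : grushinLambda1 d₁ d₂ s Ω * pN u ≤ pE s u := by
  by_cases hne : u = 0
  · subst hne
    have : pN (0 : EE d₁ × EE d₂ → ℝ) = 0 := by simp [pN]
    rw [this, mul_zero]; exact pE_nonneg _ _
  · have : grushinLambda1 d₁ d₂ s Ω ≤ pE s u / pN u := by
      refine csInf_le ⟨0, ?_⟩ ⟨u, hu.1, hu.2.1, hu.2.2, hne, (quot_eq hu).symm⟩
      rintro q ⟨u, h1, h2, h3, -, rfl⟩
      rw [quot_eq ⟨h1, h2, h3⟩]
      exact div_nonneg (pE_nonneg _ _) (integral_nonneg fun x => by positivity)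
    exact (le_div_iff₀ (pN_pos hu hne)).1 this

lemma le_lam {d₁ d₂ : ℕ} {s : ℝ} {Ω : Set (EE d₁ × EE d₂)} (ho : IsOpen Ω) (hne : Ω.Nonempty)
    {c : ℝ} (H : ∀ u, admP Ω u → c * pN u ≤ pE s u) : c ≤ grushinLambda1 d₁ d₂ s Ω := by
  refine le_csInf ?_ ?_
  · obtain ⟨x, hx⟩ := hne
    obtain ⟨f, h1, h2, h3, _, h4⟩ := exists_contDiff_tsupport_subset (n := ⊤) (ho.mem_nhds hx)
    refine ⟨_, f, h3, h2, h1, ?_, rfl⟩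
    rintro rfl
    simp at h4
  · rintro q ⟨u, h1, h2, h3, h4, rfl⟩
    rw [quot_eq ⟨h1, h2, h3⟩, le_div_iff₀ (pN_pos ⟨h1, h2, h3⟩ h4)]
    exact H u ⟨h1, h2, h3⟩

/-- anisotropic dilation -/
noncomputable def dil (d₁ d₂ : ℕ) {a b : ℝ} (ha : a ≠ 0) (hb : b ≠ 0) :
    (EE d₁ × EE d₂) ≃L[ℝ] (EE d₁ × EE d₂) :=
  (ContinuousLinearEquiv.smulLeft (Units.mk0 a ha)).prodCongr
    (ContinuousLinearEquiv.smulLeft (Units.mk0 b hb))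

lemma dil_apply (d₁ d₂ : ℕ) {a b : ℝ} (ha : a ≠ 0) (hb : b ≠ 0) (x : EE d₁ × EE d₂) :
    dil d₁ d₂ ha hb x = (a • x.1, b • x.2) := rfl

lemma dil_int (d₁ d₂ : ℕ) {a b : ℝ} (ha : a ≠ 0) (hb : b ≠ 0) :
    ∃ κ : ℝ, 0 < κ ∧ ∀ f : EE d₁ × EE d₂ → ℝ, ∫ x, f (dil d₁ d₂ ha hb x) = κ * ∫ x, f x := by
  have hdet : LinearMap.det ((dil d₁ d₂ ha hb).toLinearEquiv : (EE d₁ × EE d₂) →ₗ[ℝ] _) ≠ 0 :=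
    (LinearEquiv.isUnit_det' _).ne_zero
  have key := Measure.map_linearMap_addHaar_eq_smul_addHaar
    ((volume : Measure (EE d₁)).prod (volume : Measure (EE d₂))) hdet
  refine ⟨_, abs_pos.2 (inv_ne_zero hdet), fun f => ?_⟩
  have h1 := integral_map_equiv (μ := (volume : Measure (EE d₁)).prod (volume : Measure (EE d₂)))
    (dil d₁ d₂ ha hb).toHomeomorph.toMeasurableEquiv f
  have h2 : Measure.map (⇑(dil d₁ d₂ ha hb).toHomeomorph.toMeasurableEquiv)
    ((volume : Measure (EE d₁)).prod (volume : Measure (EE d₂))) = _ := key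
  rw [h2, integral_smul_measure, ENNReal.toReal_ofReal (abs_nonneg _), smul_eq_mul] at h1
  exact h1.symm

theorem scaling {d₁ d₂ : ℕ} {s : ℝ} (hs : 0 < s) {r₁ r₂ a b : ℝ} (hr₁ : 0 < r₁) (hr₂ : 0 < r₂)
    (ha : 0 < a) (hb : 0 < b) :
    grushinLambda1 d₁ d₂ s (Metric.ball (0 : EE d₁) r₁ ×ˢ Metric.ball (0 : EE d₂) r₂) ≤
      max (a ^ 2) (b ^ 2 / a ^ (2 * s)) *
      grushinLambda1 d₁ d₂ s (Metric.ball (0 : EE d₁) (a * r₁) ×ˢ Metric.ball (0 : EE d₂) (b * r₂)) := by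
  set m := max (a ^ 2) (b ^ 2 / a ^ (2 * s)) with hm
  have hmpos : 0 < m := lt_max_of_lt_left (by positivity)
  rw [← div_le_iff₀' hmpos]
  refine le_lam (Metric.isOpen_ball.prod Metric.isOpen_ball)
    ⟨(0, 0), Metric.mem_ball_self (by positivity), Metric.mem_ball_self (by positivity)⟩ ?_
  intro v hv
  obtain ⟨h, hc, hsup⟩ := id hv
  rw [div_mul_eq_mul_div, div_le_iff₀ hmpos]
  set Φ := dil d₁ d₂ ha.ne' hb.ne' with hΦ
  obtain ⟨κ, hκ, hintg⟩ := dil_int d₁ d₂ ha.ne' hb.ne'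
  rw [← hΦ] at hintg
  set u := fun x => v (Φ x) with hu
  have hts : tsupport u ⊆ Φ ⁻¹' tsupport v := by
    refine closure_minimal ?_ ((isClosed_tsupport v).preimage Φ.continuous)
    intro y hy
    exact subset_tsupport v hy
  have hua : admP (Metric.ball (0 : EE d₁) r₁ ×ˢ Metric.ball (0 : EE d₂) r₂) u := by
    refine ⟨h.comp Φ.contDiff, ?_, fun x hx => ?_⟩
    · exact hc.comp_homeomorph Φ.toHomeomorph
    · have h1 := hsup (hts hx)
      rw [hΦ, dil_apply] at h1
      have h2 := h1.1
      have h3 := h1.2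
      simp only [mem_ball_zero_iff, norm_smul, Real.norm_eq_abs, abs_of_pos ha, abs_of_pos hb] at h2 h3
      refine ⟨?_, ?_⟩
      · simpa using lt_of_mul_lt_mul_left h2 ha.le
      · simpa using lt_of_mul_lt_mul_left h3 hb.le
  have key := lam_le (s := s) hua
  have eN : pN u = κ * pN v := hintg fun x => v x ^ 2
  have eE : pE s u = κ * ∫ x, (a ^ 2 * D1 v x + b ^ 2 / a ^ (2 * s) * (‖x.1‖ ^ (2 * s) * D2 v x)) := by
    rw [← hintg]
    unfold pE
    congr 1
    ext x
    have e1 : D1 u x = a ^ 2 * D1 v (Φ x) := by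
      unfold D1
      have : fderiv ℝ (fun y => u (y, x.2)) x.1 = a • fderiv ℝ (fun y => v (y, b • x.2)) (a • x.1) :=
        fderiv_comp_smul (f := fun y => v (y, b • x.2)) a
      rw [this, norm_smul, mul_pow, Real.norm_eq_abs, sq_abs]
      rfl
    have e2 : D2 u x = b ^ 2 * D2 v (Φ x) := by
      unfold D2
      have : fderiv ℝ (fun y => u (x.1, y)) x.2 = b • fderiv ℝ (fun y => v (a • x.1, y)) (b • x.2) :=
        fderiv_comp_smul (f := fun y => v (a • x.1, y)) b
      rw [this, norm_smul, mul_pow, Real.norm_eq_abs, sq_abs]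
      rfl
    have e3 : ‖(Φ x).1‖ ^ (2 * s) = a ^ (2 * s) * ‖x.1‖ ^ (2 * s) := by
      change ‖a • x.1‖ ^ (2 * s) = _
      rw [norm_smul, Real.norm_of_nonneg ha.le, Real.mul_rpow ha.le (norm_nonneg _)]
    rw [e1, e2, e3]
    have : a ^ (2 * s) ≠ 0 := (Real.rpow_pos_of_pos ha _).ne'
    field_simp
  rw [eN, eE] at key
  have i1 := int_of (f := D1 v) hc (D1_cont h) (fun x hx => D1_zero h hx)
  have i2 := int_of (f := fun x => ‖x.1‖ ^ (2 * s) * D2 v x) hc ((w1_cont hs).mul (D2_cont h))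
    (fun x hx => by simp [D2_zero h hx])
  have hle : ∫ x, (a ^ 2 * D1 v x + b ^ 2 / a ^ (2 * s) * (‖x.1‖ ^ (2 * s) * D2 v x)) ≤ m * pE s v := by
    unfold pE
    rw [← integral_const_mul]
    refine integral_mono ((i1.const_mul _).add (i2.const_mul _)) ((i1.add i2).const_mul _) ?_
    intro x
    have p1 : 0 ≤ D1 v x := by unfold D1; positivity
    have p2 : 0 ≤ ‖x.1‖ ^ (2 * s) * D2 v x := by unfold D2; positivity
    have q1 : a ^ 2 ≤ m := le_max_left _ _
    have q2 : b ^ 2 / a ^ (2 * s) ≤ m := le_max_right _ _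
    have := mul_le_mul_of_nonneg_right q1 p1
    have := mul_le_mul_of_nonneg_right q2 p2
    simp only
    linarith
  have k2 : κ * (grushinLambda1 d₁ d₂ s (Metric.ball (0 : EE d₁) r₁ ×ˢ Metric.ball (0 : EE d₂) r₂) * pN v)
      ≤ κ * (m * pE s v) := by
    have := mul_le_mul_of_nonneg_left hle hκ.le
    linarith
  have := le_of_mul_le_mul_left k2 hκ
  linarith

end Part9

section Part10
open MeasureTheory Set Filter Topology

noncomputable def hh (ε t : ℝ) : ℝ := t / (1 + (t / ε) ^ 2)

lemma hh_deriv (ε t : ℝ) :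
    HasDerivAt (hh ε) ((1 - (t / ε) ^ 2) / (1 + (t / ε) ^ 2) ^ 2) t := by
  have hp : (1 + (t / ε) ^ 2) ≠ 0 := by positivity
  have h1 : HasDerivAt (fun t : ℝ => 1 + (t / ε) ^ 2) (2 * (t / ε) * (1 / ε)) t := by
    have := (((hasDerivAt_id t).div_const ε).pow 2).const_add 1
    simpa using this
  have h2 : HasDerivAt (hh ε) ((1 * (1 + (t / ε) ^ 2) - t * (2 * (t / ε) * (1 / ε))) /
      (1 + (t / ε) ^ 2) ^ 2) t := (hasDerivAt_id t).div h1 hp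
  refine h2.congr_deriv ?_
  congr 1
  ring

lemma hh_abs {ε : ℝ} (hε : 0 < ε) (t : ℝ) : |hh ε t| ≤ ε / 2 := by
  have hp : 0 < 1 + (t / ε) ^ 2 := by positivity
  rw [hh, abs_div, abs_of_pos hp, div_le_iff₀ hp]
  have e : ε / 2 * (1 + (t / ε) ^ 2) - |t| = (ε - |t|) ^ 2 / (2 * ε) := by
    rw [div_pow, ← sq_abs t]
    field_simp
    ring
  have : 0 ≤ (ε - |t|) ^ 2 / (2 * ε) := by positivity
  linarith

lemma hd_cont (ε : ℝ) : Continuous fun t : ℝ => (1 - (t / ε) ^ 2) / (1 + (t / ε) ^ 2) ^ 2 := by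
  refine Continuous.div (by fun_prop) (by fun_prop) fun t => ?_
  positivity

lemma hd_ge {ε t : ℝ} : -(1 / 8) ≤ (1 - (t / ε) ^ 2) / (1 + (t / ε) ^ 2) ^ 2 := by
  have hz : 0 ≤ (t / ε) ^ 2 := by positivity
  generalize (t / ε) ^ 2 = z at hz
  rw [le_div_iff₀ (by positivity)]
  nlinarith [sq_nonneg (z - 3)]

lemma hd_ge' {ε t : ℝ} (hε : 0 < ε) (ht : |t| ≤ ε / 2) :
    1 / 4 ≤ (1 - (t / ε) ^ 2) / (1 + (t / ε) ^ 2) ^ 2 := by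
  have hz : 0 ≤ (t / ε) ^ 2 := by positivity
  have hz1 : (t / ε) ^ 2 ≤ 1 / 4 := by
    rw [div_pow, div_le_iff₀ (by positivity), ← sq_abs t]
    nlinarith [abs_nonneg t]
  generalize (t / ε) ^ 2 = z at hz hz1
  rw [le_div_iff₀ (by positivity)]
  nlinarith

lemma coer {d : ℕ} (hd : 1 ≤ d) {φ : EE d → ℝ} (h : ContDiff ℝ (⊤ : ℕ∞) φ)
    (hc : HasCompactSupport φ) {ε : ℝ} (hε : 0 < ε) :
    ∃ k : EE d → ℝ, Continuous k ∧ (∀ x, -(1 / 8) ≤ k x) ∧ (∀ x, ‖x‖ ≤ ε / 2 → 1 / 4 ≤ k x) ∧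
      ∫ x, k x * φ x ^ 2 ≤ 1 / 8 * gN φ + 2 * ε ^ 2 * gA φ := by
  set i : Fin d := ⟨0, hd⟩
  set P : EE d →L[ℝ] ℝ := EuclideanSpace.proj i with hP
  set e : EE d := EuclideanSpace.single i 1 with he
  have hPe : P e = 1 := by simp [hP, he]
  have hen : ‖e‖ = 1 := by simp [he]
  have hPx : ∀ x, |P x| ≤ ‖x‖ := fun x => EuclideanSpace.norm_eq x ▸ by
    rw [← EuclideanSpace.norm_eq]; exact PiLp.norm_apply_le x i
  set k : EE d → ℝ := fun x => (1 - (P x / ε) ^ 2) / (1 + (P x / ε) ^ 2) ^ 2 with hk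
  have kc : Continuous k := (hd_cont ε).comp P.continuous
  have hF : ∀ x, HasFDerivAt (fun x => hh ε (P x)) (k x • P) x := fun x =>
    (hh_deriv ε (P x)).comp_hasFDerivAt x P.hasFDerivAt
  have hFc : Continuous fun x => hh ε (P x) :=
    continuous_iff_continuousAt.2 fun x => (hF x).continuousAt
  have hGd : ∀ x, HasFDerivAt (fun x => φ x ^ 2) ((2 * φ x) • fderiv ℝ φ x) x := fun x => by
    have := ((h.differentiable (by simp) x).hasFDerivAt).pow 2
    simpa using this
  have gc : Continuous (fderiv ℝ φ) := h.continuous_fderiv (by simp)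
  have z1 : ∀ x, x ∉ tsupport φ → φ x = 0 := fun x hx => image_eq_zero_of_notMem_tsupport hx
  have inte : ∀ f : EE d → ℝ, Continuous f → (∀ x, x ∉ tsupport φ → f x = 0) → Integrable f :=
    fun f hf hz => hf.integrable_of_hasCompactSupport (HasCompactSupport.intro hc hz)
  have pc := h.continuous
  have I1 : Integrable fun x => k x * φ x ^ 2 :=
    inte _ (by fun_prop) fun x hx => by simp [z1 x hx]
  have I2 : Integrable fun x => hh ε (P x) * (2 * φ x * fderiv ℝ φ x e) := by
    refine inte _ ?_ fun x hx => by simp [z1 x hx]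
    have : Continuous fun x => fderiv ℝ φ x e := gc.clm_apply continuous_const
    fun_prop
  have I3 : Integrable fun x => hh ε (P x) * φ x ^ 2 :=
    inte _ (by fun_prop) fun x hx => by simp [z1 x hx]
  have ibp := integral_mul_fderiv_eq_neg_fderiv_mul_of_integrable (μ := (volume : Measure (EE d)))
    (f := fun x => hh ε (P x)) (g := fun x => φ x ^ 2) (v := e)
    (by simpa [(hF _).fderiv, hPe] using I1) (by simpa [(hGd _).fderiv, mul_assoc] using I2) I3
    (fun x _ => (hF x).differentiableAt) (fun x _ => (hGd x).differentiableAt)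
  simp only [(hF _).fderiv, (hGd _).fderiv, smul_apply, smul_eq_mul, hPe,
    mul_one] at ibp
  refine ⟨k, kc, fun x => hd_ge, fun x hx => hd_ge' hε ((hPx x).trans hx), ?_⟩
  have e1 : ∫ x, k x * φ x ^ 2 = ∫ x, -(hh ε (P x) * (2 * φ x * fderiv ℝ φ x e)) := by
    rw [integral_neg, ibp, neg_neg]
  have IN : Integrable fun x => φ x ^ 2 := inte _ (by fun_prop) fun x hx => by simp [z1 x hx]
  have IA := grad_sq_int h hc
  rw [e1, gN, gA, ← integral_const_mul, ← integral_const_mul,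
    ← integral_add (IN.const_mul _) (IA.const_mul _)]
  refine integral_mono I2.neg ((IN.const_mul _).add (IA.const_mul _)) fun x => ?_
  have a1 : |fderiv ℝ φ x e| ≤ ‖fderiv ℝ φ x‖ := by
    have := (fderiv ℝ φ x).le_opNorm e
    rwa [hen, mul_one] at this
  have a2 := hh_abs hε (P x)
  change -(hh ε (P x) * (2 * φ x * fderiv ℝ φ x e)) ≤ 1 / 8 * φ x ^ 2 + 2 * ε ^ 2 * ‖fderiv ℝ φ x‖ ^ 2
  calc -(hh ε (P x) * (2 * φ x * fderiv ℝ φ x e)) ≤ |hh ε (P x) * (2 * φ x * fderiv ℝ φ x e)| :=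
        neg_le_abs _
    _ = |hh ε (P x)| * (2 * |φ x| * |fderiv ℝ φ x e|) := by
        rw [abs_mul, abs_mul, abs_mul, abs_two]
    _ ≤ ε / 2 * (2 * |φ x| * ‖fderiv ℝ φ x‖) := by gcongr
    _ ≤ _ := by
        rw [← sq_abs (φ x)]
        nlinarith [sq_nonneg (|φ x| - 4 * ε * ‖fderiv ℝ φ x‖)]

lemma coer_ball {d : ℕ} (hd : 1 ≤ d) {r : ℝ} (hr : 0 < r) {φ : EE d → ℝ}
    (hφ : adm (Metric.ball (0 : EE d) r) φ) : 1 / (64 * r ^ 2) * gN φ ≤ gA φ := by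
  obtain ⟨h, hc, hsup⟩ := hφ
  obtain ⟨k, kc, -, k2, k3⟩ := coer hd h hc (ε := 2 * r) (by positivity)
  have z1 : ∀ x, x ∉ tsupport φ → φ x = 0 := fun x hx => image_eq_zero_of_notMem_tsupport hx
  have inte : ∀ f : EE d → ℝ, Continuous f → (∀ x, x ∉ tsupport φ → f x = 0) → Integrable f :=
    fun f hf hz => hf.integrable_of_hasCompactSupport (HasCompactSupport.intro hc hz)
  have pc := h.continuous
  have I1 : Integrable fun x => k x * φ x ^ 2 :=
    inte _ (by fun_prop) fun x hx => by simp [z1 x hx]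
  have IN : Integrable fun x => φ x ^ 2 := inte _ (by fun_prop) fun x hx => by simp [z1 x hx]
  have : 1 / 4 * gN φ ≤ ∫ x, k x * φ x ^ 2 := by
    rw [gN, ← integral_const_mul]
    refine integral_mono (IN.const_mul _) I1 fun x => ?_
    by_cases hx : x ∈ tsupport φ
    · have h1 := mem_ball_zero_iff.1 (hsup hx)
      exact mul_le_mul_of_nonneg_right (k2 x (by linarith)) (by positivity)
    · simp [z1 x hx]
  rw [div_mul_eq_mul_div, div_le_iff₀ (by positivity)]
  linarith

lemma coer_w {d : ℕ} (hd : 1 ≤ d) {s : ℝ} (hs : 0 < s) {ε : ℝ} (hε : 0 < ε) {φ : EE d → ℝ}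
    (h : ContDiff ℝ (⊤ : ℕ∞) φ) (hc : HasCompactSupport φ) :
    gN φ ≤ 16 * ε ^ 2 * gA φ + 8 * (2 / ε) ^ (2 * s) * gB s φ := by
  obtain ⟨k, kc, k1, k2, k3⟩ := coer hd h hc hε
  have z1 : ∀ x, x ∉ tsupport φ → φ x = 0 := fun x hx => image_eq_zero_of_notMem_tsupport hx
  have inte : ∀ f : EE d → ℝ, Continuous f → (∀ x, x ∉ tsupport φ → f x = 0) → Integrable f :=
    fun f hf hz => hf.integrable_of_hasCompactSupport (HasCompactSupport.intro hc hz)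
  have pc := h.continuous
  have I1 : Integrable fun x => k x * φ x ^ 2 :=
    inte _ (by fun_prop) fun x hx => by simp [z1 x hx]
  have IN : Integrable fun x => φ x ^ 2 := inte _ (by fun_prop) fun x hx => by simp [z1 x hx]
  have IB : Integrable fun x => ‖x‖ ^ (2 * s) * φ x ^ 2 :=
    inte _ ((w_cont hs).mul (pc.pow 2)) fun x hx => by simp [z1 x hx]
  have : 1 / 4 * gN φ ≤ (∫ x, k x * φ x ^ 2) + (2 / ε) ^ (2 * s) * gB s φ := by
    rw [gN, gB, ← integral_const_mul, ← integral_const_mul, ← integral_add I1 (IB.const_mul _)]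
    refine integral_mono (IN.const_mul _) (I1.add (IB.const_mul _)) fun x => ?_
    change 1 / 4 * φ x ^ 2 ≤ k x * φ x ^ 2 + (2 / ε) ^ (2 * s) * (‖x‖ ^ (2 * s) * φ x ^ 2)
    have : 1 / 4 ≤ k x + (2 / ε) ^ (2 * s) * ‖x‖ ^ (2 * s) := by
      rcases le_or_gt ‖x‖ (ε / 2) with hx | hx
      · have := k2 x hx
        have : 0 ≤ (2 / ε) ^ (2 * s) * ‖x‖ ^ (2 * s) := by positivity
        linarith
      · rw [← Real.mul_rpow (by positivity) (by positivity)]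
        have h1 : 1 ≤ 2 / ε * ‖x‖ := by
          rw [div_mul_eq_mul_div, le_div_iff₀ hε]; linarith
        have := Real.one_le_rpow h1 (by positivity : 0 ≤ 2 * s)
        linarith [k1 x]
    have := mul_le_mul_of_nonneg_right this (sq_nonneg (φ x))
    linarith
  linarith

end Part10

section Part11
open MeasureTheory Set Filter Topology

noncomputable def rho (d₁ d₂ : ℕ) (V r : ℝ) : ℝ :=
  (V / (tau d₁ * r ^ d₁ * tau d₂)) ^ (1 / (d₂ : ℝ))

lemma rho_pos (d₁ d₂ : ℕ) {V r : ℝ} (hV : 0 < V) (hr : 0 < r) : 0 < rho d₁ d₂ V r := by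
  have := tau_pos d₁
  have := tau_pos d₂
  unfold rho; positivity

lemma rho_pow (d₁ : ℕ) {d₂ : ℕ} (hd₂ : 1 ≤ d₂) {V r : ℝ} (hV : 0 < V) (hr : 0 < r) :
    rho d₁ d₂ V r ^ d₂ = V / (tau d₁ * r ^ d₁ * tau d₂) := by
  have := tau_pos d₁
  have := tau_pos d₂
  have hd0 : (d₂ : ℝ) ≠ 0 := by positivity
  rw [rho, ← Real.rpow_natCast, ← Real.rpow_mul (by positivity), one_div_mul_cancel hd0,
    Real.rpow_one]

lemma rho_vol (d₁ : ℕ) {d₂ : ℕ} (hd₂ : 1 ≤ d₂) {V r : ℝ} (hV : 0 < V) (hr : 0 < r) :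
    tau d₁ * r ^ d₁ * (tau d₂ * rho d₁ d₂ V r ^ d₂) = V := by
  have := tau_pos d₁
  have := tau_pos d₂
  rw [rho_pow d₁ hd₂ hV hr]
  field_simp

lemma rho_cont (d₁ d₂ : ℕ) {V r : ℝ} (hr : 0 < r) :
    ContinuousAt (rho d₁ d₂ V) r := by
  have := tau_pos d₁
  have := tau_pos d₂
  unfold rho
  refine ContinuousAt.rpow_const (ContinuousAt.div continuousAt_const ?_ ?_) (Or.inr ?_)
  · fun_prop
  · positivity
  · positivity

lemma rho_lim {d₁ d₂ : ℕ} (hd₁ : 1 ≤ d₁) (hd₂ : 1 ≤ d₂) (V : ℝ) :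
    Tendsto (rho d₁ d₂ V) atTop (𝓝 0) := by
  have h1 := tau_pos d₁
  have h2 := tau_pos d₂
  have hp : 0 < 1 / (d₂ : ℝ) := by positivity
  have l1 : Tendsto (fun r : ℝ => V / (tau d₁ * r ^ d₁ * tau d₂)) atTop (𝓝 0) := by
    refine Tendsto.const_div_atTop ?_ V
    exact ((tendsto_pow_atTop (by omega)).const_mul_atTop h1).atTop_mul_const h2
  have := l1.rpow_const (p := 1 / (d₂ : ℝ)) (Or.inr hp.le)
  rwa [Real.zero_rpow hp.ne'] at this

/-- the function to minimize -/
noncomputable def FF (d₁ d₂ : ℕ) (s V r : ℝ) : ℝ :=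
  grushinLambda1 d₁ d₂ s (Metric.ball (0 : EE d₁) r ×ˢ Metric.ball (0 : EE d₂) (rho d₁ d₂ V r))

lemma FF_lsc (d₁ d₂ : ℕ) {s V : ℝ} (hs : 0 < s) (hV : 0 < V) {α β : ℝ} (hα : 0 < α) :
    LowerSemicontinuousOn (FF d₁ d₂ s V) (Icc α β) := by
  intro r₀ hr₀
  refine fun y hy => ?_
  have hp : 0 < r₀ := hα.trans_le hr₀.1
  have hρ := rho_pos d₁ d₂ hV hp
  set m : ℝ → ℝ := fun r => max ((r / r₀) ^ 2)
    ((rho d₁ d₂ V r / rho d₁ d₂ V r₀) ^ 2 / (r / r₀) ^ (2 * s)) with hm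
  have mc : ContinuousAt m r₀ := by
    refine ContinuousAt.sup (by fun_prop) (ContinuousAt.div ?_ ?_ ?_)
    · exact ((rho_cont d₁ d₂ hp).div_const _).pow 2
    · exact ContinuousAt.rpow_const (by fun_prop) (Or.inr (by positivity))
    · rw [div_self hp.ne']; simp
  have m1 : m r₀ = 1 := by
    simp [hm, div_self hp.ne', div_self hρ.ne']
  have t1 : Tendsto (fun r => y * m r) (𝓝 r₀) (𝓝 y) := by
    have := mc.tendsto.const_mul y
    rwa [m1, mul_one] at this
  have ev := (t1.mono_left (nhdsWithin_le_nhds (s := Icc α β))).eventually (gt_mem_nhds hy)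
  filter_upwards [ev, self_mem_nhdsWithin] with r h1 h2
  have hr : 0 < r := hα.trans_le h2.1
  have hρr := rho_pos d₁ d₂ hV hr
  have h3 := scaling (d₁ := d₁) (d₂ := d₂) hs hp hρ (a := r / r₀)
    (b := rho d₁ d₂ V r / rho d₁ d₂ V r₀) (by positivity) (by positivity)
  rw [div_mul_cancel₀ _ hp.ne', div_mul_cancel₀ _ hρ.ne'] at h3
  have h4 : FF d₁ d₂ s V r₀ ≤ m r * FF d₁ d₂ s V r := h3
  have mpos : 0 < m r := lt_max_of_lt_left (by positivity)
  have : m r * y < m r * FF d₁ d₂ s V r := by linarith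
  exact lt_of_mul_lt_mul_left this mpos.le

lemma FF_ge {d₁ d₂ : ℕ} {s V : ℝ} (hs : 0 < s) (hV : 0 < V) {r c M : ℝ} (hr : 0 < r)
    (H2 : ∀ ψ, adm (Metric.ball (0 : EE d₂) (rho d₁ d₂ V r)) ψ → M * gN ψ ≤ gA ψ)
    (H1 : ∀ φ, adm (Metric.ball (0 : EE d₁) r) φ → c * gN φ ≤ gA φ + M * gB s φ) :
    c ≤ FF d₁ d₂ s V r :=
  le_lam (Metric.isOpen_ball.prod Metric.isOpen_ball)
    ⟨(0, 0), Metric.mem_ball_self hr, Metric.mem_ball_self (rho_pos d₁ d₂ hV hr)⟩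
    fun _ hu => lower hs H2 H1 hu

lemma FF_small {d₁ d₂ : ℕ} (hd₁ : 1 ≤ d₁) {s V : ℝ} (hs : 0 < s) (hV : 0 < V)
    {r c : ℝ} (hr : 0 < r) (hc : 0 ≤ c) (hrc : r ≤ 1 / (8 * (c + 1))) : c ≤ FF d₁ d₂ s V r := by
  refine FF_ge hs hV (M := 0) hr (fun ψ _ => by rw [zero_mul]; exact gA_nonneg _) fun φ hφ => ?_
  rw [zero_mul, add_zero]
  refine le_trans (mul_le_mul_of_nonneg_right ?_ (gN_nonneg φ)) (coer_ball hd₁ hr hφ)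
  rw [le_div_iff₀ (by positivity)]
  rw [le_div_iff₀ (by positivity)] at hrc
  have h8 : (r * (8 * (c + 1))) ^ 2 ≤ 1 := by
    have : 0 ≤ r * (8 * (c + 1)) := by positivity
    nlinarith
  have : c ≤ (c + 1) ^ 2 := by nlinarith
  have h9 : c * (64 * r ^ 2) ≤ (c + 1) ^ 2 * (64 * r ^ 2) := by gcongr
  nlinarith

lemma FF_large {d₁ d₂ : ℕ} (hd₁ : 1 ≤ d₁) (hd₂ : 1 ≤ d₂) {s V : ℝ} (hs : 0 < s) (hV : 0 < V)
    {c : ℝ} (hc : 0 ≤ c) : ∀ᶠ r in atTop, c ≤ FF d₁ d₂ s V r := by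
  set ε := 1 / (4 * (c + 1)) with hε
  have hε0 : 0 < ε := by positivity
  have hε1 : c * (16 * ε ^ 2) ≤ 1 := by
    have : c * (16 * ε ^ 2) = c / (c + 1) ^ 2 := by rw [hε]; field_simp; norm_num
    rw [this, div_le_one (by positivity)]
    nlinarith
  set K := c * (8 * (2 / ε) ^ (2 * s)) with hK
  have lim : Tendsto (fun r => K * (64 * rho d₁ d₂ V r ^ 2)) atTop (𝓝 0) := by
    have := (((rho_lim hd₁ hd₂ V).pow 2).const_mul 64).const_mul K
    simpa using this
  filter_upwards [lim.eventually (gt_mem_nhds one_pos), eventually_gt_atTop 0] with r h1 hr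
  have hρ := rho_pos d₁ d₂ hV hr
  refine FF_ge hs hV hr (fun ψ hψ => coer_ball hd₂ hρ hψ) fun φ hφ => ?_
  have hM : K ≤ 1 / (64 * rho d₁ d₂ V r ^ 2) := by
    rw [le_div_iff₀ (by positivity)]; exact h1.le
  have h2 := mul_le_mul_of_nonneg_left (coer_w hd₁ hs hε0 hφ.1 hφ.2.1) hc
  have h3 := mul_le_mul_of_nonneg_right hε1 (gA_nonneg φ)
  have h4 := mul_le_mul_of_nonneg_right hM (gB_nonneg s φ)
  rw [hK] at h4
  linarith

lemma FF_min {d₁ d₂ : ℕ} (hd₁ : 1 ≤ d₁) (hd₂ : 1 ≤ d₂) {s V : ℝ} (hs : 0 < s) (hV : 0 < V) :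
    ∃ r₀ : ℝ, 0 < r₀ ∧ ∀ r, 0 < r → FF d₁ d₂ s V r₀ ≤ FF d₁ d₂ s V r := by
  set c := FF d₁ d₂ s V 1 with hc
  have hc0 : 0 ≤ c := lam_nonneg _ _
  obtain ⟨R, hR⟩ := eventually_atTop.1 (FF_large (d₁ := d₁) (d₂ := d₂) hd₁ hd₂ hs hV hc0)
  set α := min 1 (1 / (8 * (c + 1))) with hα
  have hα0 : 0 < α := lt_min one_pos (by positivity)
  have h1 : (1 : ℝ) ∈ Icc α (max 1 R) := ⟨min_le_left _ _, le_max_left _ _⟩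
  obtain ⟨r₀, hr₀, hmin⟩ := LowerSemicontinuousOn.exists_isMinOn ⟨1, h1⟩ isCompact_Icc
    (FF_lsc d₁ d₂ hs hV hα0 (β := max 1 R))
  have hmin : ∀ r ∈ Icc α (max 1 R), FF d₁ d₂ s V r₀ ≤ FF d₁ d₂ s V r := fun r hr => hmin hr
  refine ⟨r₀, hα0.trans_le hr₀.1, fun r hr => ?_⟩
  rcases lt_or_ge r α with h | h
  · exact (hmin 1 h1).trans (FF_small hd₁ hs hV hr hc0 (h.le.trans (min_le_right _ _)))
  · rcases le_or_gt r (max 1 R) with h' | h'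
    · exact hmin r ⟨h, h'⟩
    · exact (hmin 1 h1).trans (hR r ((le_max_right _ _).trans h'.le))

theorem final (d₁ d₂ : ℕ) (hd₁ : 1 ≤ d₁) (hd₂ : 1 ≤ d₂)
    (s : ℝ) (hs : 0 < s) (V : ℝ) (hV : 0 < V) :
    ∃ r₁ r₂ : ℝ, 0 < r₁ ∧ 0 < r₂ ∧
      tau d₁ * r₁ ^ d₁ * (tau d₂ * r₂ ^ d₂) = V ∧
      ∀ (Ω₁ : Set (EuclideanSpace ℝ (Fin d₁))) (Ω₂ : Set (EuclideanSpace ℝ (Fin d₂))),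
        IsOpen Ω₁ → IsConnected Ω₁ → Bornology.IsBounded Ω₁ →
        IsOpen Ω₂ → IsConnected Ω₂ → Bornology.IsBounded Ω₂ →
        (volume Ω₁).toReal * (volume Ω₂).toReal = V →
        grushinLambda1 d₁ d₂ s
            ((Metric.ball (0 : EuclideanSpace ℝ (Fin d₁)) r₁) ×ˢ
              (Metric.ball (0 : EuclideanSpace ℝ (Fin d₂)) r₂)) ≤
          grushinLambda1 d₁ d₂ s (Ω₁ ×ˢ Ω₂) := by
  obtain ⟨r₀, hr₀, hmin⟩ := FF_min (d₁ := d₁) (d₂ := d₂) hd₁ hd₂ hs hV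
  refine ⟨r₀, rho d₁ d₂ V r₀, hr₀, rho_pos d₁ d₂ hV hr₀, rho_vol d₁ hd₂ hV hr₀, ?_⟩
  intro Ω₁ Ω₂ ho₁ hc₁ hb₁ ho₂ hc₂ hb₂ hvol
  have key : ∀ {d : ℕ} (hd : 1 ≤ d) {Ω : Set (EE d)}, IsOpen Ω → Ω.Nonempty →
      Bornology.IsBounded Ω → 0 < radv d (volume Ω) ∧
        volume Ω = volume (Metric.ball (0 : EE d) (radv d (volume Ω))) ∧
        (volume Ω).toReal = tau d * radv d (volume Ω) ^ d := by
    intro d hd Ω ho hn hb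
    have hv := vol_radv hd (hb.measure_lt_top (μ := volume)).ne
    have hpos := ho.measure_pos volume hn
    refine ⟨?_, hv.symm, ?_⟩
    · rcases (radv_nonneg d (volume Ω)).eq_or_lt with h | h
      · rw [← h, Metric.ball_zero, measure_empty] at hv
        exact absurd hv hpos.ne
      · exact h
    · rw [vol_ball hd (radv_nonneg _ _)] at hv
      have := congrArg ENNReal.toReal hv
      have ht := tau_pos d
      have hrr := radv_nonneg d (volume Ω)
      rw [ENNReal.toReal_ofReal (by positivity)] at this
      exact this.symm
  obtain ⟨p1, v1, q1⟩ := key hd₁ ho₁ hc₁.nonempty hb₁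
  obtain ⟨p2, v2, q2⟩ := key hd₂ ho₂ hc₂.nonempty hb₂
  set r₁ := radv d₁ (volume Ω₁)
  set r₂ := radv d₂ (volume Ω₂)
  have hρ := rho_pos d₁ d₂ hV p1
  have t1 := tau_pos d₁
  have t2 := tau_pos d₂
  have e : r₂ = rho d₁ d₂ V r₁ := by
    have h1 : r₂ ^ d₂ = rho d₁ d₂ V r₁ ^ d₂ := by
      rw [rho_pow d₁ hd₂ hV p1, eq_div_iff (by positivity), ← hvol, q1, q2]
      ring
    exact (pow_left_inj₀ p2.le hρ.le (by omega)).1 h1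
  refine (hmin r₁ p1).trans ?_
  refine le_lam (ho₁.prod ho₂) (hc₁.nonempty.prod hc₂.nonempty) fun u hu => ?_
  refine compare hd₁ hd₂ hs ho₁ ho₂ hc₁.nonempty hc₂.nonempty p1 hρ v1 (e ▸ v2) ?_ hu
  exact fun u hu => lam_le hu

end Part11

/-- existence of a product of balls minimizing the first Grushin
eigenvalue among cartesian product domains of total volume `V`. -/
theorem exists_minimizing_product_of_balls (d₁ d₂ : ℕ) (hd₁ : 1 ≤ d₁) (hd₂ : 1 ≤ d₂)
    (s : ℝ) (hs : 0 < s) (V : ℝ) (hV : 0 < V) :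
    ∃ r₁ r₂ : ℝ, 0 < r₁ ∧ 0 < r₂ ∧
      tau d₁ * r₁ ^ d₁ * (tau d₂ * r₂ ^ d₂) = V ∧
      ∀ (Ω₁ : Set (EuclideanSpace ℝ (Fin d₁))) (Ω₂ : Set (EuclideanSpace ℝ (Fin d₂))),
        IsOpen Ω₁ → IsConnected Ω₁ → Bornology.IsBounded Ω₁ →
        IsOpen Ω₂ → IsConnected Ω₂ → Bornology.IsBounded Ω₂ →
        (volume Ω₁).toReal * (volume Ω₂).toReal = V →
        grushinLambda1 d₁ d₂ s
            ((Metric.ball (0 : EuclideanSpace ℝ (Fin d₁)) r₁) ×ˢ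
              (Metric.ball (0 : EuclideanSpace ℝ (Fin d₂)) r₂)) ≤
          grushinLambda1 d₁ d₂ s (Ω₁ ×ˢ Ω₂) :=
  final d₁ d₂ hd₁ hd₂ s hs V hV
end
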